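/- There exists a constant c_p > 0 depending only on p such that if ψ̂(0) ≥ c_p·‖ψ‖₂, then there exist a constant c₁ > 0 and a time t₀ ∈ (0,T) such that for all t ∈ (t₀, T): ((p+1)/p)^{1/(p+1)}·k̂(0,t) ≤ [(T−t) − c₁·(T−t)^{1 + 2/(p+1)}]^{−1/(p+1)} and ((p+1)/p)^{1/(p+1)}·k̂(0,t) ≥ [(T−t) + c₁·(T−t)^{1 + 2/(p+1)}]^{−1/(p+1)}. -/

import Mathlib

open Real MeasureTheory Filter Set

/-- The `n`-th Fourier coefficient of a `2π`-periodic function `f : ℝ → ℝ`: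
`f̂(n) = (1/2π) ∫₀^{2π} f(θ) e^{-inθ} dθ`. -/
noncomputable def fCoeff (f : ℝ → ℝ) (n : ℤ) : ℂ :=
  (1 / (2 * Real.pi)) * ∫ θ in (0:ℝ)..(2 * Real.pi),
    (f θ : ℂ) * Complex.exp (-(Complex.I * n * θ))

/-- The seminorm `‖f‖₂ = max{sup_n n²|Re f̂(n)|, sup_n n²|Im f̂(n)|}`. -/
noncomputable def seminorm2 (f : ℝ → ℝ) : ℝ :=
  max (⨆ n : ℤ, (n : ℝ)^2 * |(fCoeff f n).re|)
      (⨆ n : ℤ, (n : ℝ)^2 * |(fCoeff f n).im|)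

/-- The `C^l[0,2π]` norm: `max_{0 ≤ j ≤ l} sup_{θ ∈ [0,2π]} |f^{(j)}(θ)|`. -/
noncomputable def ClNorm (l : ℕ) (f : ℝ → ℝ) : ℝ :=
  ⨆ j : Fin (l + 1), ⨆ θ : Set.Icc (0:ℝ) (2 * Real.pi),
    |iteratedDeriv (j : ℕ) f (θ : ℝ)|

/-- `k : ℝ × [0,T) → ℝ` is a smooth, `2π`-periodic (in space), strictly positive solution of the
`p`-curve shortening equation
`∂k/∂t = k²(k^{p-1} ∂²k/∂θ² + (p-1) k^{p-2} (∂k/∂θ)² + (1/p) k^p)`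
with initial datum `ψ` (smooth, strictly positive, `2π`-periodic), blow-up time `T`
(i.e. `sup_θ k(θ,t) → ∞` as `t → T⁻`), such that `k(·,t)` is the curvature of a simple closed
convex curve for each `t`, i.e. `∫₀^{2π} e^{iθ}/k(θ,t) dθ = 0`. -/
def IsPCSF (p : ℕ) (T : ℝ) (k : ℝ → ℝ → ℝ) (ψ : ℝ → ℝ) : Prop :=
  ContDiffOn ℝ (⊤ : ℕ∞) (fun q : ℝ × ℝ => k q.1 q.2) (Set.univ ×ˢ Set.Ico 0 T) ∧
  (∀ θ t, k (θ + 2 * Real.pi) t = k θ t) ∧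
  (∀ θ : ℝ, ∀ t ∈ Set.Ico (0:ℝ) T, 0 < k θ t) ∧
  (∀ θ : ℝ, ∀ t ∈ Set.Ico (0:ℝ) T,
    HasDerivAt (fun s => k θ s)
      ((k θ t)^2 * ((k θ t)^(p - 1) * deriv (deriv (fun x => k x t)) θ
        + ((p : ℝ) - 1) * (k θ t)^(p - 2) * (deriv (fun x => k x t) θ)^2
        + (1 / (p : ℝ)) * (k θ t)^p)) t) ∧
  (∀ θ, k θ 0 = ψ θ) ∧
  ContDiff ℝ (⊤ : ℕ∞) ψ ∧ (∀ θ, 0 < ψ θ) ∧ (∀ θ, ψ (θ + 2 * Real.pi) = ψ θ) ∧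
  Filter.Tendsto (fun t => ⨆ θ : Set.Icc (0:ℝ) (2 * Real.pi), k (θ : ℝ) t)
    (nhdsWithin T (Set.Iio T)) Filter.atTop ∧
  (∀ t ∈ Set.Ico (0:ℝ) T,
    (∫ θ in (0:ℝ)..(2 * Real.pi), Complex.exp (Complex.I * θ) / (k θ t)) = 0)

/-- The original time `t` corresponding to the rescaled time `τ`:
`t = T(1 - e^{-(p+1)τ})`, i.e. `τ = -(1/(p+1))·log(1 - t/T)`. -/
noncomputable def tOf (p : ℕ) (T τ : ℝ) : ℝ := T * (1 - Real.exp (-((p : ℝ) + 1) * τ))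

/-- The normalized curvature `k̃(θ,τ) = ((p+1)/p)^{1/(p+1)} (T-t)^{1/(p+1)} k(θ,t)`,
with `t = T(1 - e^{-(p+1)τ})`. -/
noncomputable def ktilde (p : ℕ) (T : ℝ) (k : ℝ → ℝ → ℝ) (θ τ : ℝ) : ℝ :=
  (((p : ℝ) + 1) / (p : ℝ)) ^ ((1 : ℝ) / ((p : ℝ) + 1))
    * (T - tOf p T τ) ^ ((1 : ℝ) / ((p : ℝ) + 1)) * k θ (tOf p T τ)

lemma fCoeff_eq (f : ℝ → ℝ) (n : ℤ) :
    fCoeff f n = fourierCoeffOn Real.two_pi_pos (fun x => (f x : ℂ)) n := by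
  rw [fourierCoeffOn_eq_integral]
  unfold fCoeff
  rw [Complex.real_smul]
  congr 1
  · push_cast; simp
  · apply intervalIntegral.integral_congr
    intro x _
    simp only [fourier_coe_apply, smul_eq_mul]
    rw [mul_comm]
    congr 2
    have : (π:ℂ) ≠ 0 := by exact_mod_cast Real.pi_ne_zero
    push_cast
    field_simp
    ring

lemma fCoeff_zero (f : ℝ → ℝ) : (fCoeff f 0).re = (2 * π)⁻¹ * ∫ θ in (0:ℝ)..(2 * π), f θ := by
  unfold fCoeff
  simp only [Int.cast_zero, mul_zero, zero_mul, neg_zero, Complex.exp_zero, mul_one]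
  rw [intervalIntegral.integral_ofReal]
  rw [show (1 / (2 * (π:ℂ))) = (((2 * π)⁻¹ : ℝ) : ℂ) by push_cast; simp]
  rw [← Complex.ofReal_mul, Complex.ofReal_re]

lemma fCoeff_zero' (f : ℝ → ℝ) : fCoeff f 0 = (((2 * π)⁻¹ * ∫ θ in (0:ℝ)..(2 * π), f θ : ℝ) : ℂ) := by
  unfold fCoeff
  simp only [Int.cast_zero, mul_zero, zero_mul, neg_zero, Complex.exp_zero, mul_one]
  rw [intervalIntegral.integral_ofReal]
  push_cast; simp

lemma fCoeff_deriv {f f' : ℝ → ℝ} (hf : ∀ x, HasDerivAt f (f' x) x) (hf' : Continuous f')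
    (hp : f (2 * π) = f 0) (n : ℤ) : fCoeff f' n = Complex.I * n * fCoeff f n := by
  by_cases hn : n = 0
  · subst hn
    rw [fCoeff_zero', intervalIntegral.integral_eq_sub_of_hasDerivAt (fun x _ => hf x)
      (hf'.intervalIntegrable _ _), hp]
    simp
  · have hc : Continuous f := continuous_iff_continuousAt.2 fun x => (hf x).continuousAt
    have h := fourierCoeffOn_of_hasDerivAt Real.two_pi_pos (f := fun x => (f x : ℂ))
      (f' := fun x => (f' x : ℂ)) hn (fun x _ => (hf x).ofReal_comp)
      ((Complex.continuous_ofReal.comp hf').intervalIntegrable _ _)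
    rw [fCoeff_eq, fCoeff_eq, h, hp]
    have : (π:ℂ) ≠ 0 := by exact_mod_cast Real.pi_ne_zero
    have hn' : (n:ℂ) ≠ 0 := by exact_mod_cast hn
    push_cast
    field_simp
    ring_nf

lemma fCoeff_add {f g : ℝ → ℝ} (hf : Continuous f) (hg : Continuous g) (n : ℤ) :
    fCoeff (fun x => f x + g x) n = fCoeff f n + fCoeff g n := by
  unfold fCoeff
  rw [← mul_add, ← intervalIntegral.integral_add]
  · congr 1
    apply intervalIntegral.integral_congr
    intro x _
    push_cast; ring
  · apply Continuous.intervalIntegrable; fun_prop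
  · apply Continuous.intervalIntegrable; fun_prop

lemma parseval {f : ℝ → ℝ} (hf : Continuous f) :
    HasSum (fun n => ‖fCoeff f n‖ ^ 2) ((2 * π)⁻¹ * ∫ θ in (0:ℝ)..(2 * π), f θ ^ 2) := by
  have h := hasSum_sq_fourierCoeffOn (f := fun x => (f x : ℂ)) Real.two_pi_pos ?_
  · simp only [← fCoeff_eq] at h
    convert h using 1
    simp
  · have hc : Continuous (fun x => (f x : ℂ)) := by fun_prop
    have : IsFiniteMeasure (volume.restrict (Ioc (0:ℝ) (2 * π))) := by infer_instance
    obtain ⟨C, hC⟩ := (isCompact_Icc (a := (0:ℝ)) (b := 2 * π)).exists_bound_of_continuousOn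
      hc.continuousOn
    refine MemLp.of_bound hc.aestronglyMeasurable C ?_
    filter_upwards [ae_restrict_mem measurableSet_Ioc] with x hx
    exact hC x (Ioc_subset_Icc_self hx)

/-- The three Parseval identities. -/
lemma parseval3 {f f' f'' : ℝ → ℝ} (hf : ∀ x, HasDerivAt f (f' x) x)
    (hf' : ∀ x, HasDerivAt f' (f'' x) x) (hf'' : Continuous f'')
    (hp : f (2 * π) = f 0) (hp' : f' (2 * π) = f' 0) :
    HasSum (fun n : ℤ => ‖fCoeff f n‖ ^ 2) ((2 * π)⁻¹ * ∫ θ in (0:ℝ)..(2 * π), f θ ^ 2) ∧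
    HasSum (fun n : ℤ => (n:ℝ) ^ 2 * ‖fCoeff f n‖ ^ 2)
      ((2 * π)⁻¹ * ∫ θ in (0:ℝ)..(2 * π), f' θ ^ 2) ∧
    HasSum (fun n : ℤ => ((n:ℝ) ^ 2 - 1) ^ 2 * ‖fCoeff f n‖ ^ 2)
      ((2 * π)⁻¹ * ∫ θ in (0:ℝ)..(2 * π), (f'' θ + f θ) ^ 2) := by
  have hc : Continuous f := continuous_iff_continuousAt.2 fun x => (hf x).continuousAt
  have hc' : Continuous f' := continuous_iff_continuousAt.2 fun x => (hf' x).continuousAt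
  refine ⟨parseval hc, ?_, ?_⟩
  · convert parseval hc' using 2 with n
    rw [fCoeff_deriv hf hc' hp]
    simp [mul_pow]
  · convert parseval (f := fun x => f'' x + f x) (hf''.add hc) using 2 with n
    rw [fCoeff_add hf'' hc,
      fCoeff_deriv hf' hf'' hp', fCoeff_deriv hf hc' hp]
    rw [show Complex.I * n * (Complex.I * n * fCoeff f n) + fCoeff f n
      = (((1 - (n:ℝ)^2 : ℝ)) : ℂ) * fCoeff f n by
        push_cast
        linear_combination (n:ℂ)^2 * fCoeff f n * Complex.I_sq]
    rw [norm_mul, mul_pow, Complex.norm_real, Real.norm_eq_abs, sq_abs]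
    ring

lemma spectral {f f' f'' : ℝ → ℝ} (hf : ∀ x, HasDerivAt f (f' x) x)
    (hf' : ∀ x, HasDerivAt f' (f'' x) x) (hf'' : Continuous f'')
    (hp : f (2 * π) = f 0) (hp' : f' (2 * π) = f' 0)
    (h0 : ∫ θ in (0:ℝ)..(2 * π), f θ = 0)
    (h1 : ‖fCoeff f 1‖ ^ 2 + ‖fCoeff f (-1)‖ ^ 2 ≤
      (1 / 10) * ((2 * π)⁻¹ * ∫ θ in (0:ℝ)..(2 * π), f θ ^ 2)) :
    (81/10) * (∫ θ in (0:ℝ)..(2 * π), f θ ^ 2) ≤ ∫ θ in (0:ℝ)..(2 * π), (f'' θ + f θ) ^ 2 ∧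
    (∫ θ in (0:ℝ)..(2 * π), f' θ ^ 2) ≤
      2 * ((∫ θ in (0:ℝ)..(2 * π), f' θ ^ 2) - ∫ θ in (0:ℝ)..(2 * π), f θ ^ 2) := by
  obtain ⟨s0, s1, s2⟩ := parseval3 hf hf' hf'' hp hp'
  have hpi : 0 < (2 * π)⁻¹ := by positivity
  have hc0 : fCoeff f 0 = 0 := by rw [fCoeff_zero', h0]; simp
  have e1 : HasSum (fun n : ℤ => if n = 1 then ‖fCoeff f 1‖ ^ 2 else 0) (‖fCoeff f 1‖ ^ 2) :=
    hasSum_ite_eq 1 _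
  have e2 : HasSum (fun n : ℤ => if n = -1 then ‖fCoeff f (-1)‖ ^ 2 else 0)
    (‖fCoeff f (-1)‖ ^ 2) := hasSum_ite_eq (-1) _
  have e := e1.add e2
  have key : ∀ n : ℤ, n = 0 ∨ n = 1 ∨ n = -1 ∨ (4:ℝ) ≤ (n:ℝ)^2 := by
    intro n
    by_contra! h
    obtain ⟨a, b, c, d⟩ := h
    have d' : n ^ 2 < 4 := by exact_mod_cast d
    have : n < 2 := by nlinarith
    have : -2 < n := by nlinarith
    omega
  have g1 := hasSum_le (fun n => ?_) ((s0.sub e).mul_left 9) s2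
  have g2 := hasSum_le (fun n => ?_) ((s1.sub e).mul_left (3/4)) (s1.sub s0)
  · have g3 := hasSum_le (fun n => ?_) (s0) (s1)
    · set a := ∫ θ in (0:ℝ)..(2 * π), f θ ^ 2
      set b := ∫ θ in (0:ℝ)..(2 * π), f' θ ^ 2
      set c := ∫ θ in (0:ℝ)..(2 * π), (f'' θ + f θ) ^ 2
      constructor
      · have : (2 * π)⁻¹ * ((81/10) * a) ≤ (2 * π)⁻¹ * c := by nlinarith
        exact le_of_mul_le_mul_left this hpi
      · have : (2 * π)⁻¹ * b ≤ (2 * π)⁻¹ * (2 * (b - a)) := by nlinarith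
        exact le_of_mul_le_mul_left this hpi
    · rcases key n with h | h | h | h
      · subst h; simp [hc0]
      · subst h; simp
      · subst h; simp
      · nlinarith [sq_nonneg ‖fCoeff f n‖]
  · rcases key n with h | h | h | h
    · subst h; simp [hc0]
    · subst h; simp
    · subst h; simp
    · have n1 : n ≠ 1 := by rintro rfl; norm_num at h
      have n2 : n ≠ -1 := by rintro rfl; norm_num at h
      simp only [n1, n2, if_false]
      nlinarith [sq_nonneg ‖fCoeff f n‖]
  · rcases key n with h | h | h | h
    · subst h; simp [hc0]
    · subst h; simp
    · subst h; simp
    · have n1 : n ≠ 1 := by rintro rfl; norm_num at h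
      have n2 : n ≠ -1 := by rintro rfl; norm_num at h
      simp only [n1, n2, if_false]
      have : (9:ℝ) ≤ ((n:ℝ)^2-1)^2 := by nlinarith
      nlinarith [sq_nonneg ‖fCoeff f n‖]

lemma cs_int {g : ℝ → ℝ} (hg : Continuous g) :
    (∫ θ in (0:ℝ)..(2 * π), g θ) ^ 2 ≤ 2 * π * ∫ θ in (0:ℝ)..(2 * π), g θ ^ 2 := by
  set J := ∫ θ in (0:ℝ)..(2 * π), g θ with hJ
  have h : 0 ≤ ∫ θ in (0:ℝ)..(2 * π), (2 * π * g θ - J) ^ 2 :=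
    intervalIntegral.integral_nonneg Real.two_pi_pos.le fun x _ => sq_nonneg _
  have e : ∫ θ in (0:ℝ)..(2 * π), (2 * π * g θ - J) ^ 2
      = (2 * π)^2 * (∫ θ in (0:ℝ)..(2 * π), g θ ^ 2) - 2 * (2 * π) * J * J + (2 * π) * J ^ 2 := by
    have : ∀ θ, (2 * π * g θ - J) ^ 2 = (2 * π)^2 * g θ ^ 2 - (2 * (2 * π) * J) * g θ + J ^ 2 := by
      intro θ; ring
    simp only [this]
    rw [intervalIntegral.integral_add, intervalIntegral.integral_sub,
      intervalIntegral.integral_const_mul, intervalIntegral.integral_const_mul,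
      intervalIntegral.integral_const, ← hJ]
    · simp
    all_goals apply Continuous.intervalIntegrable; fun_prop
  rw [e] at h
  have : 0 ≤ (2 * π) * (2 * π * (∫ θ in (0:ℝ)..(2 * π), g θ ^ 2) - J ^ 2) := by nlinarith
  have := nonneg_of_mul_nonneg_right this Real.two_pi_pos
  linarith

lemma sup_bound {f f' : ℝ → ℝ} (hf : ∀ x, HasDerivAt f (f' x) x) (hf' : Continuous f')
    (h0 : ∫ θ in (0:ℝ)..(2 * π), f θ = 0) {x : ℝ} (hx : x ∈ Icc (0:ℝ) (2 * π)) :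
    f x ^ 2 ≤ 2 * π * ∫ θ in (0:ℝ)..(2 * π), f' θ ^ 2 := by
  have hc : Continuous f := continuous_iff_continuousAt.2 fun x => (hf x).continuousAt
  obtain ⟨c, hc1, hc2⟩ : ∃ c ∈ Ioo (0:ℝ) (2 * π), f c = 0 := by
    apply exists_hasDerivAt_eq_zero (f := fun x => ∫ θ in (0:ℝ)..x, f θ) Real.two_pi_pos
    · exact (intervalIntegral.continuous_primitive (fun a b => hc.intervalIntegrable a b) 0).continuousOn
    · simp [h0]
    · intro x _
      exact intervalIntegral.integral_hasDerivAt_right (hc.intervalIntegrable _ _)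
        (hc.stronglyMeasurableAtFilter _ _) hc.continuousAt
  have e : f x = ∫ θ in c..x, f' θ := by
    rw [intervalIntegral.integral_eq_sub_of_hasDerivAt (fun x _ => hf x)
      (hf'.intervalIntegrable _ _), hc2, sub_zero]
  have hb : |f x| ≤ ∫ θ in (0:ℝ)..(2 * π), |f' θ| := by
    rw [e, ← Real.norm_eq_abs]
    refine (intervalIntegral.norm_integral_le_integral_norm_uIoc).trans ?_
    simp only [Real.norm_eq_abs]
    rw [intervalIntegral.integral_of_le Real.two_pi_pos.le]
    apply setIntegral_mono_set
    · exact (hf'.abs.intervalIntegrable 0 (2*π)).1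
    · exact Eventually.of_forall fun x => abs_nonneg _
    · apply LE.le.eventuallyLE
      intro y hy
      rw [mem_uIoc] at hy
      rcases hy with hy | hy
      · exact ⟨hc1.1.trans hy.1, hy.2.trans hx.2⟩
      · exact ⟨hx.1.trans_lt hy.1, hy.2.trans hc1.2.le⟩
  calc f x ^ 2 = |f x| ^ 2 := (sq_abs _).symm
    _ ≤ (∫ θ in (0:ℝ)..(2 * π), |f' θ|) ^ 2 := by gcongr
    _ ≤ 2 * π * ∫ θ in (0:ℝ)..(2 * π), |f' θ| ^ 2 := cs_int hf'.abs
    _ = _ := by simp only [sq_abs]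

lemma tangent (p : ℕ) : ∃ C : ℝ, 0 ≤ C ∧ ∀ y : ℝ, 1 / 2 ≤ y →
    1 - p * (y - 1) ≤ (1 / y) ^ p ∧ (1 / y) ^ p ≤ 1 - p * (y - 1) + C * (y - 1) ^ 2 := by
  induction p with
  | zero => exact ⟨0, le_rfl, fun y _ => by simp⟩
  | succ p ih =>
    obtain ⟨C, hC, h⟩ := ih
    refine ⟨2 * (1 + p + C), by positivity, fun y hy => ?_⟩
    obtain ⟨h1, h2⟩ := h y hy
    have y0 : 0 < y := by linarith
    have z0 : 0 < 1 / y := by positivity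
    have z2 : 1 / y ≤ 2 := by rw [div_le_iff₀ y0]; linarith
    have zy : 1 / y * y = 1 := by field_simp
    set z := 1 / y
    have e1 : z = 1 - (y - 1) + z * (y - 1) ^ 2 := by linear_combination (2 - y) * zy
    have e2 : z * (y - 1) = (y - 1) - z * (y - 1) ^ 2 := by
      linear_combination (y - 1) * zy
    rw [pow_succ]
    push_cast
    have hz : 0 ≤ z * (y - 1) ^ 2 := by positivity
    have hz2 : z * (y - 1) ^ 2 ≤ 2 * (y - 1) ^ 2 := by gcongr
    constructor
    · have : (1 - p * (y - 1)) * z ≤ z ^ p * z := by gcongr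
      have e3 : (1 - p * (y - 1)) * z = 1 - (p + 1) * (y - 1) + (1 + p) * (z * (y - 1) ^ 2) := by
        linear_combination e1 - p * e2
      have : 0 ≤ (1 + (p:ℝ)) * (z * (y - 1) ^ 2) := by positivity
      linarith
    · have : z ^ p * z ≤ (1 - p * (y - 1) + C * (y - 1) ^ 2) * z := by gcongr
      have e3 : (1 - p * (y - 1) + C * (y - 1) ^ 2) * z
        = 1 - (p + 1) * (y - 1) + (1 + p + C) * (z * (y - 1) ^ 2) := by
        linear_combination e1 - p * e2
      have : (1 + p + C) * (z * (y - 1) ^ 2) ≤ (1 + p + C) * (2 * (y - 1) ^ 2) := by gcongr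
      linarith

lemma x_sub_one {p : ℕ} (hp : 1 ≤ p) {x : ℝ} (hx : 0 < x) : |x - 1| ≤ |x ^ p - 1| := by
  rcases le_total 1 x with h | h
  · have : x ≤ x ^ p := le_self_pow₀ h (by omega)
    rw [abs_of_nonneg (by linarith), abs_of_nonneg (by linarith)]; linarith
  · have : x ^ p ≤ x := pow_le_of_le_one hx.le h (by omega)
    rw [abs_of_nonpos (by linarith), abs_of_nonpos (by linarith)]; linarith

lemma x_pow_succ {p : ℕ} (hp : 1 ≤ p) {x : ℝ} (hx : 0 < x) (h : |x ^ p - 1| ≤ 1/100) :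
    |x ^ (p+1) - 1| ≤ 2.01 * |x ^ p - 1| := by
  have h1 := x_sub_one hp hx
  have e : x ^ (p+1) - 1 = x * (x ^ p - 1) + (x - 1) := by ring
  rw [e]
  have hx' : |x| ≤ 1.01 := by
    have := abs_le.1 (h1.trans h)
    rw [abs_of_pos hx]; linarith
  calc |x * (x ^ p - 1) + (x - 1)| ≤ |x| * |x ^ p - 1| + |x - 1| := by
        rw [← abs_mul]; exact abs_add_le _ _
    _ ≤ 1.01 * |x ^ p - 1| + |x ^ p - 1| := by gcongr
    _ = _ := by ring

lemma x_inv {p : ℕ} (hp : 1 ≤ p) {x : ℝ} (hx : 0 < x) (h : |x ^ p - 1| ≤ 1/100) :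
    |1 / x - 1| ≤ 2 * |x ^ p - 1| := by
  have h1 := x_sub_one hp hx
  have h2 := abs_le.1 (h1.trans h)
  have e : 1 / x - 1 = (1 / x) * (1 - x) := by field_simp
  have z2 : 1 / x ≤ 2 := by rw [div_le_iff₀ hx]; linarith
  have z0 : 0 < 1 / x := by positivity
  rw [e, abs_mul, abs_of_pos z0, abs_sub_comm]
  gcongr

lemma fCoeff_const (c : ℝ) {n : ℤ} (hn : n ≠ 0) : fCoeff (fun _ => c) n = 0 := by
  have h := fCoeff_deriv (f := fun _ => c) (f' := fun _ => 0) (fun x => hasDerivAt_const x c)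
    continuous_const rfl n
  have h0 : fCoeff (fun _ => 0) n = 0 := by simp [fCoeff]
  rw [h0] at h
  have hn' : (n:ℂ) ≠ 0 := by exact_mod_cast hn
  have := h.symm
  simpa [hn'] using this

lemma fCoeff_mul (c : ℝ) (f : ℝ → ℝ) (n : ℤ) : fCoeff (fun x => c * f x) n = c * fCoeff f n := by
  unfold fCoeff
  rw [mul_left_comm, ← intervalIntegral.integral_const_mul (c : ℂ)]
  congr 1
  apply intervalIntegral.integral_congr
  intro x _
  push_cast; ring

lemma fCoeff_neg (f : ℝ → ℝ) (n : ℤ) : fCoeff f (-n) = (starRingEnd ℂ) (fCoeff f n) := by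
  unfold fCoeff
  rw [map_mul, ← intervalIntegral.intervalIntegral_conj]
  congr 1
  · simpa using (map_ofNat (starRingEnd ℂ) 2).symm
  · apply intervalIntegral.integral_congr
    intro x _
    simp [← Complex.exp_conj]

lemma closure_coeff {k : ℝ → ℝ}
    (h : (∫ θ in (0:ℝ)..(2 * Real.pi), Complex.exp (Complex.I * θ) / (k θ)) = 0) :
    fCoeff (fun x => 1 / k x) (-1) = 0 ∧ fCoeff (fun x => 1 / k x) 1 = 0 := by
  have h1 : fCoeff (fun x => 1 / k x) (-1) = 0 := by
    unfold fCoeff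
    rw [← mul_zero (1 / (2 * (π:ℂ))), ← h]
    congr 1
    apply intervalIntegral.integral_congr
    intro x _
    simp [div_eq_inv_mul]
  refine ⟨h1, ?_⟩
  have := fCoeff_neg (fun x => 1 / k x) (-1)
  rw [h1] at this
  simpa using this

lemma exists_kappa {p : ℕ} (hp : 1 ≤ p) {A : ℝ} (hA : 0 < A) : ∃ κ : ℝ, 0 < κ ∧ κ ^ p = A :=
  ⟨A ^ ((p:ℝ)⁻¹), by positivity, Real.rpow_inv_natCast_pow hA.le (by omega)⟩

lemma scale_w {p : ℕ} {κ A k : ℝ} (hκ : 0 < κ) (hA : κ ^ p = A) :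
    (k / κ) ^ p - 1 = (k ^ p - A) / A := by
  have : 0 < A := hA ▸ pow_pos hκ p
  rw [div_pow, hA]; field_simp

lemma scale_le {p : ℕ} {κ A k δ : ℝ} (hκ : 0 < κ) (hA : κ ^ p = A) (h : |k ^ p - A| ≤ δ * A) :
    |(k / κ) ^ p - 1| ≤ δ := by
  have : 0 < A := hA ▸ pow_pos hκ p
  rw [scale_w hκ hA, abs_div, abs_of_pos this, div_le_iff₀ this]; exact h

lemma mode_one {p : ℕ} (hp : 1 ≤ p) : ∃ δ : ℝ, 0 < δ ∧ δ ≤ 1/100 ∧ ∀ (k : ℝ → ℝ) (A : ℝ),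
    Continuous k → (∀ x, 0 < k x) → 0 < A →
    (∀ x ∈ Icc (0:ℝ) (2 * π), |k x ^ p - A| ≤ δ * A) →
    (∫ θ in (0:ℝ)..(2 * Real.pi), Complex.exp (Complex.I * θ) / (k θ)) = 0 →
    ‖fCoeff (fun x => k x ^ p - A) 1‖ ^ 2 + ‖fCoeff (fun x => k x ^ p - A) (-1)‖ ^ 2 ≤
      (1 / 10) * ((2 * π)⁻¹ * ∫ θ in (0:ℝ)..(2 * π), (k θ ^ p - A) ^ 2) := by
  obtain ⟨C, hC, ht⟩ := tangent p
  refine ⟨min (1/100) (1 / (4 * (4 * C + 1))), by positivity, min_le_left _ _, ?_⟩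
  set δ := min (1/100 : ℝ) (1 / (4 * (4 * C + 1))) with hδ
  have hδ1 : δ ≤ 1/100 := min_le_left _ _
  have hδ2 : 4 * C * δ ≤ 1/4 := by
    have : δ ≤ 1 / (4 * (4 * C + 1)) := min_le_right _ _
    rw [le_div_iff₀ (by positivity)] at this
    have : 0 < δ := by positivity
    nlinarith
  have hδ0 : 0 < δ := by positivity
  intro k A hk hk0 hA hb hcl
  obtain ⟨κ, hκ, hκA⟩ := exists_kappa hp hA
  obtain ⟨c1, c2⟩ := closure_coeff hcl
  have hik : Continuous (fun x => 1 / k x) := continuous_const.div hk fun x => (hk0 x).ne'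
  set g : ℝ → ℝ := fun x => (k x ^ p - A) + ((p * A * κ) * (1 / k x) + (- (p * A))) with hg
  have hgc : Continuous g := by fun_prop
  have hgn : ∀ n : ℤ, n ≠ 0 → fCoeff (fun x => 1 / k x) n = 0 →
      fCoeff (fun x => k x ^ p - A) n = fCoeff g n := by
    intro n hn h0
    rw [hg, fCoeff_add (by fun_prop) (by fun_prop), fCoeff_add (by fun_prop) (by fun_prop),
      fCoeff_const _ hn, fCoeff_mul, h0]
    simp
  rw [hgn 1 (by norm_num) c2, hgn (-1) (by norm_num) c1]
  have hs := sum_le_hasSum {1, -1} (fun i _ => by positivity) (parseval hgc)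
  rw [Finset.sum_pair (by norm_num)] at hs
  refine hs.trans ?_
  rw [← mul_assoc, mul_comm (1/10 : ℝ), mul_assoc]
  have hpi : 0 < (2 * π)⁻¹ := by positivity
  refine mul_le_mul_of_nonneg_left ?_ hpi.le
  rw [← intervalIntegral.integral_const_mul]
  apply intervalIntegral.integral_mono_on Real.two_pi_pos.le
  · apply Continuous.intervalIntegrable; fun_prop
  · apply Continuous.intervalIntegrable; fun_prop
  intro x hx
  have hw := scale_le hκ hκA (hb x hx)
  have hx0 : 0 < k x / κ := div_pos (hk0 x) hκ
  have hi := x_inv hp hx0 (hw.trans hδ1)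
  have hww := scale_w (k := k x) hκ hκA
  set w := (k x / κ) ^ p - 1 with hwdef
  set y := 1 / (k x / κ) with hy
  have hy12 : 1/2 ≤ y := by
    have := abs_le.1 hi
    linarith
  obtain ⟨t1, t2⟩ := ht y hy12
  have e1 : (1 / y) ^ p = 1 + w := by rw [hy, hwdef]; simp
  rw [e1] at t1 t2
  have eg : g x = A * (w + p * (y - 1)) := by
    have ey : y = κ * (1 / k x) := by rw [hy]; field_simp
    rw [hww, ey, hg]; field_simp; ring
  have ef : k x ^ p - A = A * w := by rw [hww]; field_simp
  rw [eg, ef, mul_pow, mul_pow]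
  have hsq : (y - 1) ^ 2 ≤ 4 * w ^ 2 := by
    rw [← sq_abs (y - 1), ← sq_abs w]
    calc |y - 1| ^ 2 ≤ (2 * |w|) ^ 2 := by gcongr
      _ = _ := by ring
  have hsum : w + p * (y - 1) ≤ (1/4) * |w| := by
    have : w + p * (y-1) ≤ C * (4 * w ^ 2) := by
      have : C * (y-1)^2 ≤ C * (4 * w ^ 2) := by gcongr
      linarith
    have h2 : w ^ 2 ≤ δ * |w| := by
      rw [← sq_abs, sq]; gcongr
    have : C * (4 * w ^ 2) ≤ C * (4 * (δ * |w|)) := by gcongr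
    nlinarith [abs_nonneg w]
  have hsum0 : 0 ≤ w + p * (y - 1) := by linarith
  have : (w + p * (y - 1)) ^ 2 ≤ (1/10) * w ^ 2 := by
    calc (w + p * (y - 1)) ^ 2 ≤ ((1/4) * |w|) ^ 2 := by gcongr
      _ = (1/16) * w ^ 2 := by rw [mul_pow, sq_abs]; norm_num
      _ ≤ _ := by nlinarith [sq_nonneg w]
  nlinarith [sq_nonneg A]

lemma pointwise_D {p : ℕ} (hp : 1 ≤ p) {κ A k h : ℝ} (hκ : 0 < κ) (hκA : κ ^ p = A)
    (hk : 0 < k) (hb : |k ^ p - A| ≤ (1/100) * A) :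
    κ ^ (p+1) * (0.635 * h ^ 2 - 3.015 * (k ^ p - A) ^ 2) + A * κ ^ (p+1) * h ≤
      k ^ (p+1) * (h + A) * h := by
  have hA : 0 < A := hκA ▸ pow_pos hκ p
  have hw := scale_le hκ hκA hb
  have hx0 : 0 < k / κ := div_pos hk hκ
  have hX := x_pow_succ hp hx0 hw
  have hww := scale_w (k := k) hκ hκA
  have ek : k ^ (p+1) = κ ^ (p+1) * (k / κ) ^ (p+1) := by rw [← mul_pow]; congr 1; field_simp
  set w := (k / κ) ^ p - 1 with hwdef
  set X := (k / κ) ^ (p+1)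
  have ef : k ^ p - A = A * w := by rw [hww]; field_simp
  rw [ek, ef]
  have hpos : 0 < κ ^ (p+1) := by positivity
  have hXb : 0.97 ≤ X := by
    have := abs_le.1 (hX.trans (by gcongr : 2.01 * |w| ≤ 2.01 * (1/100)))
    norm_num at this ⊢
    linarith
  have h1 : -(2.01 * (1.5 * (A * w) ^ 2 + h ^ 2 / 6)) ≤ A * (X - 1) * h := by
    have : |A * (X - 1) * h| ≤ 2.01 * (|A * w| * |h|) := by
      rw [abs_mul, abs_mul, abs_mul, abs_of_pos hA]
      calc A * |X - 1| * |h| ≤ A * (2.01 * |w|) * |h| := by gcongr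
        _ = _ := by ring
    have h2 : |A * w| * |h| ≤ 1.5 * (A * w) ^ 2 + h ^ 2 / 6 := by
      rw [← sq_abs (A * w), ← sq_abs h]
      nlinarith [sq_nonneg (3 * |A * w| - |h|)]
    have := (abs_le.1 this).1
    linarith
  have h2 : 0.635 * h ^ 2 - 3.015 * (A * w) ^ 2 + A * h ≤ X * (h + A) * h := by
    nlinarith [sq_nonneg h]
  calc _ = κ ^ (p+1) * (0.635 * h ^ 2 - 3.015 * (A * w) ^ 2 + A * h) := by ring
    _ ≤ κ ^ (p+1) * (X * (h + A) * h) := by gcongr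
    _ = _ := by ring

/-- The dissipation is nonnegative, and the Dirichlet form controls the gradient. -/
lemma dissipation {p : ℕ} (hp : 1 ≤ p) : ∃ δ : ℝ, 0 < δ ∧ δ ≤ 1/100 ∧
    ∀ (k v' v'' : ℝ → ℝ) (A : ℝ),
    Continuous k → (∀ x, 0 < k x) → (∀ x, k (x + 2 * π) = k x) →
    (∀ x, HasDerivAt (fun x => k x ^ p) (v' x) x) → (∀ x, HasDerivAt v' (v'' x) x) →
    Continuous v'' → v' (2 * π) = v' 0 →
    2 * π * A = ∫ θ in (0:ℝ)..(2 * π), k θ ^ p →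
    (∀ x ∈ Icc (0:ℝ) (2 * π), |k x ^ p - A| ≤ δ * A) →
    (∫ θ in (0:ℝ)..(2 * Real.pi), Complex.exp (Complex.I * θ) / (k θ)) = 0 →
    0 ≤ (∫ θ in (0:ℝ)..(2 * π), k θ ^ (p+1) * (v'' θ + k θ ^ p) * (v'' θ + k θ ^ p - A)) ∧
    (∫ θ in (0:ℝ)..(2 * π), v' θ ^ 2) ≤
      2 * ((∫ θ in (0:ℝ)..(2 * π), v' θ ^ 2) - ∫ θ in (0:ℝ)..(2 * π), (k θ ^ p - A) ^ 2) := by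
  obtain ⟨δ, hδ0, hδ1, hm⟩ := mode_one hp
  refine ⟨δ, hδ0, hδ1, ?_⟩
  intro k v' v'' A hk hk0 hper hv hv' hv'' hvp hA hb hcl
  have hpi := Real.two_pi_pos
  have hA0 : 0 < A := by
    have : 0 < ∫ θ in (0:ℝ)..(2 * π), k θ ^ p :=
      intervalIntegral.intervalIntegral_pos_of_pos_on ((hk.pow p).intervalIntegrable _ _)
        (fun x _ => pow_pos (hk0 x) p) hpi
    rw [← hA] at this
    exact pos_of_mul_pos_right this hpi.le
  have h1 := hm k A hk hk0 hA0 hb hcl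
  have hcv' : Continuous v' := continuous_iff_continuousAt.2 fun x => (hv' x).continuousAt
  have hk2 : k (2 * π) = k 0 := by have := hper 0; simpa using this
  have h0 : ∫ θ in (0:ℝ)..(2 * π), (k θ ^ p - A) = 0 := by
    rw [intervalIntegral.integral_sub (Continuous.intervalIntegrable (by fun_prop) _ _)
      (Continuous.intervalIntegrable (by fun_prop) _ _),
      ← hA, intervalIntegral.integral_const]
    simp
  obtain ⟨s1, s2⟩ := spectral (f := fun x => k x ^ p - A) (f' := v') (f'' := v'')
    (fun x => (hv x).sub_const A) hv' hv'' (by simp [hk2]) hvp h0 h1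
  refine ⟨?_, s2⟩
  obtain ⟨κ, hκ, hκA⟩ := exists_kappa hp hA0
  set h : ℝ → ℝ := fun x => v'' x + (k x ^ p - A) with hh
  have hhc : Continuous h := by fun_prop
  have hint : ∫ θ in (0:ℝ)..(2 * π), h θ = 0 := by
    rw [hh, intervalIntegral.integral_add (hv''.intervalIntegrable _ _)
      (Continuous.intervalIntegrable (by fun_prop) _ _), h0,
      intervalIntegral.integral_eq_sub_of_hasDerivAt (fun x _ => hv' x)
      (hv''.intervalIntegrable _ _), hvp]
    simp
  have hmono : ∫ θ in (0:ℝ)..(2 * π), (κ ^ (p+1) * (0.635 * h θ ^ 2 - 3.015 * (k θ ^ p - A) ^ 2)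
      + A * κ ^ (p+1) * h θ) ≤ ∫ θ in (0:ℝ)..(2 * π),
        k θ ^ (p+1) * (v'' θ + k θ ^ p) * (v'' θ + k θ ^ p - A) := by
    apply intervalIntegral.integral_mono_on hpi.le
    · apply Continuous.intervalIntegrable; fun_prop
    · apply Continuous.intervalIntegrable; fun_prop
    intro x hx
    have := pointwise_D hp (h := h x) hκ hκA (hk0 x)
      ((hb x hx).trans (mul_le_mul_of_nonneg_right hδ1 hA0.le))
    refine this.trans (le_of_eq ?_)
    simp only [hh]; ring
  refine le_trans ?_ hmono
  rw [intervalIntegral.integral_add (Continuous.intervalIntegrable (by fun_prop) _ _)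
    (Continuous.intervalIntegrable (by fun_prop) _ _), intervalIntegral.integral_const_mul,
    intervalIntegral.integral_const_mul, hint, intervalIntegral.integral_sub
    (Continuous.intervalIntegrable (by fun_prop) _ _)
    (Continuous.intervalIntegrable (by fun_prop) _ _), intervalIntegral.integral_const_mul,
    intervalIntegral.integral_const_mul, mul_zero, add_zero]
  have hpos : 0 < κ ^ (p+1) := by positivity
  have hf0 : 0 ≤ ∫ θ in (0:ℝ)..(2 * π), (k θ ^ p - A) ^ 2 :=
    intervalIntegral.integral_nonneg hpi.le fun x _ => sq_nonneg _
  apply mul_nonneg hpos.le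
  nlinarith

lemma initial_a (η : ℝ) (hη : 0 < η) : ∃ cp : ℝ, 0 < cp ∧ ∀ (ψ ψ' ψ'' : ℝ → ℝ),
    (∀ x, HasDerivAt ψ (ψ' x) x) → (∀ x, HasDerivAt ψ' (ψ'' x) x) → Continuous ψ'' →
    ψ (2 * π) = ψ 0 → ψ' (2 * π) = ψ' 0 →
    cp * seminorm2 ψ ≤ (fCoeff ψ 0).re →
    (∫ θ in (0:ℝ)..(2 * π), ψ' θ ^ 2) ≤ η * ((fCoeff ψ 0).re) ^ 2 := by
  have hsum : Summable (fun n : ℤ => 1 / (n:ℝ) ^ 2) := by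
    exact_mod_cast Real.summable_one_div_int_pow.2 one_lt_two
  set Z := ∑' n : ℤ, 1 / (n:ℝ) ^ 2 with hZ
  have hZ0 : 0 ≤ Z := tsum_nonneg fun n => by positivity
  have hpi := Real.two_pi_pos
  refine ⟨√((2 * π * (2 * Z) + 1) / η), by positivity, ?_⟩
  set cp := √((2 * π * (2 * Z) + 1) / η) with hcp
  have hcp0 : 0 < cp := by positivity
  have hcp2 : cp ^ 2 = (2 * π * (2 * Z) + 1) / η := Real.sq_sqrt (by positivity)
  intro ψ ψ' ψ'' h1 h2 h3 hp hp' hN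
  obtain ⟨s0, s1, s2⟩ := parseval3 h1 h2 h3 hp hp'
  have hc' : Continuous ψ' := continuous_iff_continuousAt.2 fun x => (h2 x).continuousAt
  -- boundedness of the coefficients
  have hbd : ∃ B : ℝ, ∀ n : ℤ, (n:ℝ) ^ 2 * ‖fCoeff ψ n‖ ≤ B := by
    have hs := parseval h3
    refine ⟨√((2 * π)⁻¹ * ∫ θ in (0:ℝ)..(2 * π), ψ'' θ ^ 2), fun n => ?_⟩
    have := le_hasSum hs n (fun _ _ => by positivity)
    have e : ‖fCoeff ψ'' n‖ = (n:ℝ) ^ 2 * ‖fCoeff ψ n‖ := by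
      rw [fCoeff_deriv h2 h3 hp', fCoeff_deriv h1 hc' hp]
      simp only [norm_mul, Complex.norm_I, Complex.norm_intCast, one_mul]
      rw [← sq_abs]; ring
    rw [← e]
    exact Real.le_sqrt_of_sq_le this
  obtain ⟨B, hB⟩ := hbd
  set N := seminorm2 ψ with hNd
  have hre : ∀ n : ℤ, (n:ℝ) ^ 2 * |(fCoeff ψ n).re| ≤ N := fun n =>
    (le_ciSup (f := fun n : ℤ => (n:ℝ) ^ 2 * |(fCoeff ψ n).re|) ⟨B, by
      rintro _ ⟨m, rfl⟩
      exact (mul_le_mul_of_nonneg_left (Complex.abs_re_le_norm _) (sq_nonneg _)).trans (hB m)⟩ n).trans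
      (le_max_left _ _)
  have him : ∀ n : ℤ, (n:ℝ) ^ 2 * |(fCoeff ψ n).im| ≤ N := fun n =>
    (le_ciSup (f := fun n : ℤ => (n:ℝ) ^ 2 * |(fCoeff ψ n).im|) ⟨B, by
      rintro _ ⟨m, rfl⟩
      exact (mul_le_mul_of_nonneg_left (Complex.abs_im_le_norm _) (sq_nonneg _)).trans (hB m)⟩ n).trans
      (le_max_right _ _)
  have hN0 : 0 ≤ N := by simpa using hre 0
  have hle : (2 * π)⁻¹ * ∫ θ in (0:ℝ)..(2 * π), ψ' θ ^ 2 ≤ 2 * N ^ 2 * Z := by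
    refine hasSum_le (fun n => ?_) s1 (hsum.hasSum.mul_left (2 * N ^ 2))
    by_cases hn : n = 0
    · subst hn; simp
    have hn' : (0:ℝ) < (n:ℝ) ^ 2 := by positivity
    rw [mul_one_div, le_div_iff₀ hn', Complex.sq_norm, Complex.normSq_apply]
    have a1 : ((n:ℝ) ^ 2 * |(fCoeff ψ n).re|) ^ 2 ≤ N ^ 2 := by gcongr; exact hre n
    have a2 : ((n:ℝ) ^ 2 * |(fCoeff ψ n).im|) ^ 2 ≤ N ^ 2 := by gcongr; exact him n
    rw [mul_pow, sq_abs] at a1 a2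
    nlinarith
  have hK : (cp * N) ^ 2 ≤ ((fCoeff ψ 0).re) ^ 2 := by gcongr
  rw [inv_mul_le_iff₀ hpi] at hle
  refine hle.trans ?_
  rw [mul_pow, hcp2, div_mul_eq_mul_div, div_le_iff₀ hη] at hK
  nlinarith [sq_nonneg N]

lemma initial_b {p : ℕ} (hp : 1 ≤ p) (ε : ℝ) (hε : 0 < ε) : ∃ η : ℝ, 0 < η ∧ ∀ (ψ ψ' : ℝ → ℝ),
    (∀ x, HasDerivAt ψ (ψ' x) x) → Continuous ψ' → (∀ x, 0 < ψ x) →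
    (∫ θ in (0:ℝ)..(2 * π), ψ' θ ^ 2) ≤ η * ((fCoeff ψ 0).re) ^ 2 →
    (∫ θ in (0:ℝ)..(2 * π), (p * ψ θ ^ (p-1) * ψ' θ) ^ 2) *
      ((2 * π)⁻¹ * ∫ θ in (0:ℝ)..(2 * π), 1 / ψ θ) ^ (2 * p) ≤ ε := by
  have hpi := Real.two_pi_pos
  have hp0 : (0:ℝ) < p := by exact_mod_cast hp
  refine ⟨min (1 / (4 * (2 * π))) (ε / (p ^ 2 * 2 ^ (4 * p))), by positivity, ?_⟩
  set η := min (1 / (4 * (2 * π))) (ε / (p ^ 2 * 2 ^ (4 * p))) with hη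
  have hη1 : 2 * π * η ≤ 1/4 := by
    have : η ≤ 1 / (4 * (2 * π)) := min_le_left _ _
    rw [le_div_iff₀ (by positivity)] at this
    linarith
  have hη2 : p ^ 2 * 2 ^ (4 * p) * η ≤ ε := by
    have : η ≤ ε / (p ^ 2 * 2 ^ (4 * p)) := min_le_right _ _
    rw [le_div_iff₀ (by positivity)] at this
    linarith
  intro ψ ψ' h1 hc' hpos hint
  have hc : Continuous ψ := continuous_iff_continuousAt.2 fun x => (h1 x).continuousAt
  set K := (fCoeff ψ 0).re with hK
  have hKe : 2 * π * K = ∫ θ in (0:ℝ)..(2 * π), ψ θ := by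
    rw [hK, fCoeff_zero]; field_simp
  have hK0 : 0 < K := by
    have : 0 < ∫ θ in (0:ℝ)..(2 * π), ψ θ :=
      intervalIntegral.intervalIntegral_pos_of_pos_on (hc.intervalIntegrable _ _)
        (fun x _ => hpos x) hpi
    rw [← hKe] at this
    exact pos_of_mul_pos_right this hpi.le
  have h0 : ∫ θ in (0:ℝ)..(2 * π), (ψ θ - K) = 0 := by
    rw [intervalIntegral.integral_sub (hc.intervalIntegrable _ _) (by simp),
      ← hKe, intervalIntegral.integral_const]
    simp
  have hsup : ∀ x ∈ Icc (0:ℝ) (2 * π), K / 2 ≤ ψ x ∧ ψ x ≤ 2 * K := by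
    intro x hx
    have := sup_bound (f := fun x => ψ x - K) (fun x => (h1 x).sub_const K) hc' h0 hx
    have h2 : (ψ x - K) ^ 2 ≤ (K / 2) ^ 2 := by
      have : 2 * π * ∫ θ in (0:ℝ)..(2 * π), ψ' θ ^ 2 ≤ 2 * π * (η * K ^ 2) := by gcongr
      nlinarith [sq_nonneg K]
    have := abs_le_of_sq_le_sq' h2 (by positivity)
    constructor <;> linarith
  have hL : (2 * π)⁻¹ * ∫ θ in (0:ℝ)..(2 * π), 1 / ψ θ ≤ 2 / K := by
    rw [inv_mul_le_iff₀ hpi]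
    calc ∫ θ in (0:ℝ)..(2 * π), 1 / ψ θ ≤ ∫ θ in (0:ℝ)..(2 * π), 2 / K := by
          apply intervalIntegral.integral_mono_on hpi.le
          · exact (continuous_const.div hc fun x => (hpos x).ne').intervalIntegrable _ _
          · simp
          intro x hx
          have := (hsup x hx).1
          rw [div_le_div_iff₀ (hpos x) hK0]; linarith
      _ = _ := by rw [intervalIntegral.integral_const]; simp
  have hL0 : 0 ≤ (2 * π)⁻¹ * ∫ θ in (0:ℝ)..(2 * π), 1 / ψ θ := by
    apply mul_nonneg (by positivity)
    exact intervalIntegral.integral_nonneg hpi.le fun x _ => (by have := hpos x; positivity)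
  have hV : (∫ θ in (0:ℝ)..(2 * π), (p * ψ θ ^ (p-1) * ψ' θ) ^ 2) ≤
      (p * (2 * K) ^ (p-1)) ^ 2 * (η * K ^ 2) := by
    calc _ ≤ ∫ θ in (0:ℝ)..(2 * π), (p * (2 * K) ^ (p-1)) ^ 2 * ψ' θ ^ 2 := by
          apply intervalIntegral.integral_mono_on hpi.le
          · apply Continuous.intervalIntegrable; fun_prop
          · apply Continuous.intervalIntegrable; fun_prop
          intro x hx
          have a := (hsup x hx).2
          have b := (hpos x).le
          rw [mul_pow]
          gcongr
      _ ≤ _ := by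
          rw [intervalIntegral.integral_const_mul]
          gcongr
  calc _ ≤ (p * (2 * K) ^ (p-1)) ^ 2 * (η * K ^ 2) * (2 / K) ^ (2 * p) := by gcongr
    _ = p ^ 2 * 2 ^ (4 * p) * η / 4 := by
        obtain ⟨m, rfl⟩ : ∃ m, p = m + 1 := ⟨p - 1, by omega⟩
        simp only [Nat.add_sub_cancel, div_pow, mul_pow]
        have : K ^ (2 * (m+1)) = (K ^ m) ^ 2 * K ^ 2 := by ring
        rw [this]
        have e2 : (2:ℝ) ^ (4 * (m+1)) = ((2:ℝ) ^ m) ^ 2 * 2 ^ (2 * (m+1)) * 4 := by ring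
        rw [e2]
        field_simp
    _ ≤ ε := by
        have : 0 ≤ p ^ 2 * 2 ^ (4 * p) * η := by positivity
        linarith

/-- the space-time domain -/
def STD (T : ℝ) : Set (ℝ × ℝ) := Set.univ ×ˢ Set.Ico 0 T

lemma STD_uniqueDiff (T : ℝ) : UniqueDiffOn ℝ (STD T) :=
  uniqueDiffOn_univ.prod (uniqueDiffOn_Ico 0 T)

lemma slice_space {T : ℝ} {G : ℝ × ℝ → ℝ} (hG : ContDiffOn ℝ (⊤ : ℕ∞) G (STD T)) :
    ∃ G1 : ℝ × ℝ → ℝ, ContDiffOn ℝ (⊤ : ℕ∞) G1 (STD T) ∧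
      ∀ θ, ∀ t ∈ Ico 0 T, HasDerivAt (fun x => G (x, t)) (G1 (θ, t)) θ := by
  refine ⟨fun q => fderivWithin ℝ G (STD T) q (1, 0), ?_, ?_⟩
  · exact (hG.fderivWithin (STD_uniqueDiff T) (m := (⊤ : ℕ∞)) (by simp)).clm_apply
      contDiffOn_const
  · intro θ t ht
    have hd := (hG.differentiableOn (by simp) (θ, t) ⟨mem_univ _, ht⟩).hasFDerivWithinAt
    have hl : HasDerivAt (fun x : ℝ => (x, t)) ((1:ℝ), (0:ℝ)) θ :=
      (hasDerivAt_id θ).prodMk (hasDerivAt_const θ t)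
    have hm : MapsTo (fun x : ℝ => (x, t)) univ (STD T) := fun x _ => ⟨mem_univ _, ht⟩
    have := hd.comp_hasDerivWithinAt (s := univ) θ hl.hasDerivWithinAt hm
    exact hasDerivWithinAt_univ.1 this

lemma slice_time {T : ℝ} {G : ℝ × ℝ → ℝ} (hG : ContDiffOn ℝ (⊤ : ℕ∞) G (STD T)) :
    ∃ G1 : ℝ × ℝ → ℝ, ContDiffOn ℝ (⊤ : ℕ∞) G1 (STD T) ∧
      ∀ θ, ∀ t ∈ Ioo 0 T, HasDerivAt (fun s => G (θ, s)) (G1 (θ, t)) t := by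
  refine ⟨fun q => fderivWithin ℝ G (STD T) q (0, 1), ?_, ?_⟩
  · exact (hG.fderivWithin (STD_uniqueDiff T) (m := (⊤ : ℕ∞)) (by simp)).clm_apply
      contDiffOn_const
  · intro θ t ht
    have ht' : t ∈ Ico 0 T := Ioo_subset_Ico_self ht
    have hd := (hG.differentiableOn (by simp) (θ, t) ⟨mem_univ _, ht'⟩).hasFDerivWithinAt
    have hl : HasDerivAt (fun x : ℝ => (θ, x)) ((0:ℝ), (1:ℝ)) t :=
      (hasDerivAt_const t θ).prodMk (hasDerivAt_id t)
    have := hd.comp_hasDerivWithinAt (s := Ico 0 T) t hl.hasDerivWithinAt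
      (fun x hx => ⟨mem_univ _, hx⟩)
    exact this.hasDerivAt (Ico_mem_nhds ht.1 ht.2)

lemma slice_cont {T : ℝ} {G : ℝ × ℝ → ℝ} (hG : ContinuousOn G (STD T)) {t : ℝ}
    (ht : t ∈ Ico 0 T) : Continuous (fun x => G (x, t)) := by
  have : ContinuousOn (fun x : ℝ => G (x, t)) univ :=
    hG.comp (f := fun x : ℝ => (x, t)) (by fun_prop) (fun x _ => ⟨mem_univ _, ht⟩)
  exact continuousOn_univ.1 this

lemma slice_bound {T : ℝ} {G : ℝ × ℝ → ℝ} (hG : ContinuousOn G (STD T)) {b : ℝ} (hb : b < T) :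
    ∃ C : ℝ, ∀ x ∈ Icc (0:ℝ) (2 * π), ∀ t ∈ Icc 0 b, ‖G (x, t)‖ ≤ C := by
  have hc : IsCompact (Icc (0:ℝ) (2 * π) ×ˢ Icc 0 b) := isCompact_Icc.prod isCompact_Icc
  obtain ⟨C, hC⟩ := hc.exists_bound_of_continuousOn (hG.mono (by
    rintro ⟨x, t⟩ ⟨_, h2⟩
    exact ⟨mem_univ _, h2.1, h2.2.trans_lt hb⟩))
  exact ⟨C, fun x hx t ht => hC (x, t) ⟨hx, ht⟩⟩

lemma param_cont {T : ℝ} {G : ℝ × ℝ → ℝ} (hG : ContinuousOn G (STD T)) :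
    ContinuousOn (fun t => ∫ θ in (0:ℝ)..(2 * π), G (θ, t)) (Ico 0 T) := by
  intro t ht
  obtain ⟨b, hb1, hb2⟩ := exists_between ht.2
  obtain ⟨C, hC⟩ := slice_bound hG hb2
  have hev : ∀ᶠ s in nhdsWithin t (Ico 0 T), s ∈ Ico 0 T ∧ s < b :=
    (eventually_mem_nhdsWithin).and (mem_nhdsWithin_of_mem_nhds (Iio_mem_nhds hb1))
  apply intervalIntegral.continuousWithinAt_of_dominated_interval (bound := fun _ => C)
  · filter_upwards [hev] with s hs
    exact (slice_cont hG hs.1).aestronglyMeasurable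
  · filter_upwards [hev] with s hs
    refine Eventually.of_forall fun x hx => ?_
    rw [uIoc_of_le Real.two_pi_pos.le] at hx
    exact hC x (Ioc_subset_Icc_self hx) s ⟨hs.1.1, hs.2.le⟩
  · simp
  · refine Eventually.of_forall fun x hx => ?_
    have : ContinuousOn (fun s : ℝ => G (x, s)) (Ico 0 T) :=
      hG.comp (f := fun s : ℝ => (x, s)) (by fun_prop) (fun s hs => ⟨mem_univ _, hs⟩)
    exact this t ht

lemma param_deriv {T : ℝ} {G : ℝ × ℝ → ℝ} (hG : ContDiffOn ℝ (⊤ : ℕ∞) G (STD T))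
    {t : ℝ} (ht : t ∈ Ioo 0 T) {d : ℝ → ℝ}
    (hd : ∀ θ, HasDerivAt (fun s => G (θ, s)) (d θ) t) :
    HasDerivAt (fun t => ∫ θ in (0:ℝ)..(2 * π), G (θ, t)) (∫ θ in (0:ℝ)..(2 * π), d θ) t := by
  obtain ⟨G1, hG1, h1⟩ := slice_time hG
  have ed : d = fun θ => G1 (θ, t) := by
    funext θ; exact (hd θ).unique (h1 θ t ht)
  rw [ed]
  obtain ⟨b, hb1, hb2⟩ := exists_between ht.2
  obtain ⟨C, hC⟩ := slice_bound hG1.continuousOn hb2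
  have ht' : t ∈ Ico 0 T := Ioo_subset_Ico_self ht
  refine (intervalIntegral.hasDerivAt_integral_of_dominated_loc_of_deriv_le
    (F := fun s θ => G (θ, s)) (F' := fun s θ => G1 (θ, s)) (s := Ioo 0 b) (bound := fun _ => C)
    (Ioo_mem_nhds ht.1 hb1) ?_ ?_ ?_ ?_ ?_ ?_).2
  · filter_upwards [Ioo_mem_nhds ht.1 ht.2] with s hs
    exact (slice_cont hG.continuousOn (Ioo_subset_Ico_self hs)).aestronglyMeasurable
  · exact (slice_cont hG.continuousOn ht').intervalIntegrable _ _
  · exact (slice_cont hG1.continuousOn ht').aestronglyMeasurable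
  · refine Eventually.of_forall fun x hx s hs => ?_
    rw [uIoc_of_le Real.two_pi_pos.le] at hx
    exact hC x (Ioc_subset_Icc_self hx) s (Ioo_subset_Icc_self hs)
  · simp
  · exact Eventually.of_forall fun x _ s hs => h1 x s ⟨hs.1, hs.2.trans hb2⟩

lemma energy_diff {v v' v'' u u' u'' : ℝ → ℝ} (hv : ∀ x, HasDerivAt v (v' x) x)
    (hv' : ∀ x, HasDerivAt v' (v'' x) x) (hv'' : Continuous v'')
    (hu : ∀ x, HasDerivAt u (u' x) x)
    (hu' : ∀ x, HasDerivAt u' (u'' x) x) (hu'' : Continuous u'')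
    (pv : v (2 * π) = v 0) (pv' : v' (2 * π) = v' 0)
    (pu : u (2 * π) = u 0) (pu' : u' (2 * π) = u' 0) :
    ((∫ θ in (0:ℝ)..(2 * π), v' θ ^ 2) - ∫ θ in (0:ℝ)..(2 * π), v θ ^ 2) =
    ((∫ θ in (0:ℝ)..(2 * π), u' θ ^ 2) - ∫ θ in (0:ℝ)..(2 * π), u θ ^ 2) -
      ∫ θ in (0:ℝ)..(2 * π), (v θ - u θ) * ((v'' θ + v θ) + (u'' θ + u θ)) := by
  have c1 : Continuous v := continuous_iff_continuousAt.2 fun x => (hv x).continuousAt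
  have c2 : Continuous v' := continuous_iff_continuousAt.2 fun x => (hv' x).continuousAt
  have c3 : Continuous u := continuous_iff_continuousAt.2 fun x => (hu x).continuousAt
  have c4 : Continuous u' := continuous_iff_continuousAt.2 fun x => (hu' x).continuousAt
  have ibp := intervalIntegral.integral_mul_deriv_eq_deriv_mul (a := 0) (b := 2 * π)
    (u := fun x => v x - u x) (v := fun x => v' x + u' x)
    (fun x _ => (hv x).sub (hu x)) (fun x _ => (hv' x).add (hu' x))
    ((c2.sub c4).intervalIntegrable _ _) ((hv''.add hu'').intervalIntegrable _ _)
  simp only [pv, pv', pu, pu', sub_self, zero_sub] at ibp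
  have e1 : ∫ θ in (0:ℝ)..(2 * π), (v θ - u θ) * ((v'' θ + v θ) + (u'' θ + u θ)) =
      (∫ θ in (0:ℝ)..(2 * π), (v θ - u θ) * (v'' θ + u'' θ)) +
      ((∫ θ in (0:ℝ)..(2 * π), v θ ^ 2) - ∫ θ in (0:ℝ)..(2 * π), u θ ^ 2) := by
    rw [← intervalIntegral.integral_sub, ← intervalIntegral.integral_add]
    · apply intervalIntegral.integral_congr
      intro x _
      simp only []
      ring
    all_goals apply Continuous.intervalIntegrable; fun_prop
  have e2 : ∫ θ in (0:ℝ)..(2 * π), (v' θ - u' θ) * (v' θ + u' θ) =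
      (∫ θ in (0:ℝ)..(2 * π), v' θ ^ 2) - ∫ θ in (0:ℝ)..(2 * π), u' θ ^ 2 := by
    rw [← intervalIntegral.integral_sub]
    · apply intervalIntegral.integral_congr
      intro x _
      simp only []
      ring
    all_goals apply Continuous.intervalIntegrable; fun_prop
  rw [e1, ibp, e2]
  ring

/-- mean of `k^p` -/
noncomputable def mA (p : ℕ) (k : ℝ → ℝ → ℝ) (t : ℝ) : ℝ :=
  (2 * π)⁻¹ * ∫ θ in (0:ℝ)..(2 * π), k θ t ^ p

/-- mean of `1/k` -/
noncomputable def mL (k : ℝ → ℝ → ℝ) (t : ℝ) : ℝ :=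
  (2 * π)⁻¹ * ∫ θ in (0:ℝ)..(2 * π), 1 / k θ t

/-- Dirichlet energy -/
noncomputable def mW (V1 : ℝ × ℝ → ℝ) (t : ℝ) : ℝ := ∫ θ in (0:ℝ)..(2 * π), V1 (θ, t) ^ 2

/-- the deficit -/
noncomputable def mD (p : ℕ) (k : ℝ → ℝ → ℝ) (V1 : ℝ × ℝ → ℝ) (t : ℝ) : ℝ :=
  mW V1 t - ∫ θ in (0:ℝ)..(2 * π), (k θ t ^ p - mA p k t) ^ 2

lemma split_int {a q : ℝ → ℝ} (ca : Continuous a) (cq : Continuous q) (A : ℝ) :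
    ∫ θ in (0:ℝ)..(2 * π), a θ * q θ * (q θ - A) =
      (∫ θ in (0:ℝ)..(2 * π), a θ * q θ * q θ) - A * ∫ θ in (0:ℝ)..(2 * π), a θ * q θ := by
  rw [← intervalIntegral.integral_const_mul, ← intervalIntegral.integral_sub]
  · apply intervalIntegral.integral_congr
    intro x _
    simp only []; ring
  all_goals apply Continuous.intervalIntegrable; fun_prop

lemma flow {p : ℕ} (hp : 1 ≤ p) {T : ℝ} (hT : 0 < T) {k : ℝ → ℝ → ℝ} {ψ : ℝ → ℝ}
    (h : IsPCSF p T k ψ) : ∃ V1 V2 : ℝ × ℝ → ℝ,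
    (∀ t ∈ Ico 0 T, Continuous (fun x => k x t)) ∧
    (∀ t ∈ Ico 0 T, ∀ x, HasDerivAt (fun x => k x t ^ p) (V1 (x, t)) x) ∧
    (∀ t ∈ Ico 0 T, ∀ x, HasDerivAt (fun x => V1 (x, t)) (V2 (x, t)) x) ∧
    (∀ t ∈ Ico 0 T, Continuous (fun x => V2 (x, t))) ∧
    (∀ t ∈ Ico 0 T, V1 (2 * π, t) = V1 (0, t)) ∧
    (∀ x, V1 (x, 0) = p * ψ x ^ (p-1) * deriv ψ x) ∧
    ContinuousOn (mW V1) (Ico 0 T) ∧ ContinuousOn (mL k) (Ico 0 T) ∧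
    ContinuousOn (mD p k V1) (Ico 0 T) ∧
    (∀ t ∈ Ioo 0 T, HasDerivAt (mL k) (-(1 / (p:ℝ)) * mA p k t) t) ∧
    (∀ t ∈ Ioo 0 T, HasDerivAt (mD p k V1) (-2 * ∫ θ in (0:ℝ)..(2 * π),
      k θ t ^ (p+1) * (V2 (θ, t) + k θ t ^ p) * (V2 (θ, t) + k θ t ^ p - mA p k t)) t) := by
  obtain ⟨hsm, hper, hpos, heq, hini, hψ, hψ0, hψp, hblow, hcl⟩ := h
  have hpi := Real.two_pi_pos
  have hp0 : (0:ℝ) < p := by exact_mod_cast hp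
  set F : ℝ × ℝ → ℝ := fun q => k q.1 q.2 with hF
  have hFs : ContDiffOn ℝ (⊤ : ℕ∞) F (STD T) := hsm
  have hFpos : ∀ q ∈ STD T, F q ≠ 0 := fun q hq => (hpos q.1 q.2 hq.2).ne'
  obtain ⟨K1, hK1, d1⟩ := slice_space hFs
  obtain ⟨K2, hK2, d2⟩ := slice_space hK1
  set V1 : ℝ × ℝ → ℝ := fun q => p * F q ^ (p-1) * K1 q with hV1
  set V2 : ℝ × ℝ → ℝ := fun q => p * ((p - 1) * F q ^ (p-2) * K1 q ^ 2 + F q ^ (p-1) * K2 q)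
    with hV2
  have sV : ContDiffOn ℝ (⊤ : ℕ∞) (fun q => F q ^ p) (STD T) := hFs.pow p
  have sV1 : ContDiffOn ℝ (⊤ : ℕ∞) V1 (STD T) := (contDiffOn_const.mul (hFs.pow _)).mul hK1
  have sV2 : ContDiffOn ℝ (⊤ : ℕ∞) V2 (STD T) := contDiffOn_const.mul
    (((contDiffOn_const.mul (hFs.pow _)).mul (hK1.pow 2)).add ((hFs.pow _).mul hK2))
  have sI : ContDiffOn ℝ (⊤ : ℕ∞) (fun q => 1 / F q) (STD T) := contDiffOn_const.div hFs hFpos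
  have dv : ∀ t ∈ Ico 0 T, ∀ x, HasDerivAt (fun x => k x t ^ p) (V1 (x, t)) x := by
    intro t ht x
    exact (d1 x t ht).fun_pow p
  have dv' : ∀ t ∈ Ico 0 T, ∀ x, HasDerivAt (fun x => V1 (x, t)) (V2 (x, t)) x := by
    intro t ht x
    have := (((d1 x t ht).fun_pow (p-1)).const_mul (p:ℝ)).mul (d2 x t ht)
    refine this.congr_deriv ?_
    simp only [hV2, hF]
    rw [Nat.cast_sub hp, show p - 1 - 1 = p - 2 by omega]
    push_cast
    ring
  -- time derivatives
  have hkt : ∀ t ∈ Ico 0 T, ∀ x, HasDerivAt (fun s => k x s)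
      (k x t ^ 2 * ((1 / (p:ℝ)) * (V2 (x, t) + k x t ^ p))) t := by
    intro t ht x
    refine (heq x t ht).congr_deriv ?_
    have e1 : deriv (fun x => k x t) = fun x => K1 (x, t) := by
      funext y; exact (d1 y t ht).deriv
    rw [e1, (d2 x t ht).deriv]
    simp only [hV2, hF]
    field_simp
    ring
  have hvt : ∀ t ∈ Ico 0 T, ∀ x, HasDerivAt (fun s => k x s ^ p)
      (k x t ^ (p+1) * (V2 (x, t) + k x t ^ p)) t := by
    intro t ht x
    refine ((hkt t ht x).fun_pow p).congr_deriv ?_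
    obtain ⟨m, rfl⟩ : ∃ m, p = m + 1 := ⟨p - 1, by omega⟩
    simp only [Nat.add_sub_cancel]
    field_simp
    ring
  have hρt : ∀ t ∈ Ico 0 T, ∀ x, HasDerivAt (fun s => 1 / k x s)
      (-(1 / (p:ℝ)) * (V2 (x, t) + k x t ^ p)) t := by
    intro t ht x
    have h0 := hpos x t ht
    have := (hkt t ht x).fun_inv h0.ne'
    simp only [one_div]
    refine this.congr_deriv ?_
    field_simp
  have hck : ∀ t ∈ Ico 0 T, Continuous (fun x => k x t) := fun t ht => slice_cont hFs.continuousOn ht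
  have hcV2 : ∀ t ∈ Ico 0 T, Continuous (fun x => V2 (x, t)) :=
    fun t ht => slice_cont sV2.continuousOn ht
  have hk2 : ∀ t, k (2 * π) t = k 0 t := fun t => by have := hper 0 t; simpa using this
  have pV1 : ∀ t ∈ Ico 0 T, V1 (2 * π, t) = V1 (0, t) := by
    intro t ht
    have a := dv t ht (0 + 2 * π)
    have b := a.comp_add_const 0 (2 * π)
    simp only [hper] at b
    have := b.unique (dv t ht 0)
    simpa using this
  have hi0 : ∀ t ∈ Ico 0 T, ∫ θ in (0:ℝ)..(2 * π), (V2 (θ, t) + k θ t ^ p) = 2 * π * mA p k t := by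
    intro t ht
    have hkp : Continuous (fun x => k x t ^ p) := (hck t ht).pow p
    rw [intervalIntegral.integral_add ((hcV2 t ht).intervalIntegrable _ _)
      (hkp.intervalIntegrable _ _),
      intervalIntegral.integral_eq_sub_of_hasDerivAt (fun x _ => dv' t ht x)
      ((hcV2 t ht).intervalIntegrable _ _), pV1 t ht, sub_self, zero_add, mA]
    field_simp
  -- the deficit, expanded
  have hDe : ∀ t ∈ Ico 0 T, mD p k V1 t =
      (mW V1 t - ∫ θ in (0:ℝ)..(2 * π), (k θ t ^ p) ^ 2) + 2 * π * mA p k t ^ 2 := by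
    intro t ht
    have hc := hck t ht
    have hA : ∫ θ in (0:ℝ)..(2 * π), k θ t ^ p = 2 * π * mA p k t := by rw [mA]; field_simp
    have : ∫ θ in (0:ℝ)..(2 * π), (k θ t ^ p - mA p k t) ^ 2 =
        (∫ θ in (0:ℝ)..(2 * π), (k θ t ^ p) ^ 2) - 2 * π * mA p k t ^ 2 := by
      have e : ∀ θ, (k θ t ^ p - mA p k t) ^ 2 =
        (k θ t ^ p) ^ 2 - (2 * mA p k t) * k θ t ^ p + mA p k t ^ 2 := fun θ => by ring
      simp only [e]
      rw [intervalIntegral.integral_add, intervalIntegral.integral_sub,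
        intervalIntegral.integral_const_mul, hA, intervalIntegral.integral_const]
      · simp; ring
      all_goals apply Continuous.intervalIntegrable; fun_prop
    rw [mD, this]; ring
  have cW : ContinuousOn (mW V1) (Ico 0 T) := param_cont (sV1.pow 2).continuousOn
  have cA : ContinuousOn (mA p k) (Ico 0 T) :=
    continuousOn_const.mul (param_cont sV.continuousOn)
  refine ⟨V1, V2, hck, dv, dv', hcV2, pV1, ?_, cW,
    continuousOn_const.mul (param_cont sI.continuousOn), ?_, ?_, ?_⟩
  · intro x
    have h0 : (0:ℝ) ∈ Ico 0 T := ⟨le_rfl, hT⟩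
    have : K1 (x, 0) = deriv ψ x := by
      rw [← (d1 x 0 h0).deriv]
      congr 1
      funext y; exact hini y
    simp only [hV1, hF, hini, this]
  · refine ContinuousOn.congr ?_ hDe
    refine (cW.sub ?_).add (continuousOn_const.mul (cA.pow 2))
    exact param_cont (G := fun q => (F q ^ p) ^ 2) (sV.pow 2).continuousOn
  · intro t ht
    have ht' : t ∈ Ico 0 T := Ioo_subset_Ico_self ht
    have := (param_deriv sI ht (fun θ => hρt t ht' θ)).const_mul (2 * π)⁻¹
    refine this.congr_deriv ?_
    rw [intervalIntegral.integral_const_mul, hi0 t ht']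
    field_simp
  · intro t ht
    have ht' : t ∈ Ico 0 T := Ioo_subset_Ico_self ht
    have hcst : ∀ {G : ℝ × ℝ → ℝ}, ContDiffOn ℝ (⊤ : ℕ∞) G (STD T) →
        ContDiffOn ℝ (⊤ : ℕ∞) (fun q : ℝ × ℝ => G (q.1, t)) (STD T) := by
      intro G hG
      exact hG.comp (f := fun q : ℝ × ℝ => (q.1, t)) (by fun_prop) (fun q _ => ⟨mem_univ _, ht'⟩)
    have sq := sV2.add sV
    set G : ℝ × ℝ → ℝ := fun q => (F q ^ p - F (q.1, t) ^ p) *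
      ((V2 q + F q ^ p) + (V2 (q.1, t) + F (q.1, t) ^ p)) with hG
    have sG : ContDiffOn ℝ (⊤ : ℕ∞) G (STD T) :=
      (sV.sub (hcst sV)).mul (sq.add (hcst sq))
    obtain ⟨Q1, _, dQ⟩ := slice_time sq
    set d : ℝ → ℝ := fun θ => (k θ t ^ (p+1) * (V2 (θ, t) + k θ t ^ p)) with hd
    have dG := param_deriv sG ht (d := fun θ => 2 * (d θ * (V2 (θ, t) + k θ t ^ p))) (by
      intro θ
      have a := (hvt t ht' θ).sub_const (k θ t ^ p)
      have b := (dQ θ t ht).add_const (V2 (θ, t) + F (θ, t) ^ p)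
      refine (a.mul b).congr_deriv ?_
      simp only [hF, hd]
      ring)
    have dA : HasDerivAt (mA p k) ((2 * π)⁻¹ * ∫ θ in (0:ℝ)..(2 * π), d θ) t :=
      (param_deriv sV ht (fun θ => hvt t ht' θ)).const_mul _
    have hev : mD p k V1 =ᶠ[nhds t] fun s => ((mW V1 t - ∫ θ in (0:ℝ)..(2 * π), (k θ t ^ p) ^ 2) -
        ∫ θ in (0:ℝ)..(2 * π), G (θ, s)) + 2 * π * mA p k s ^ 2 := by
      filter_upwards [Ioo_mem_nhds ht.1 ht.2] with s hs
      have hs' : s ∈ Ico 0 T := Ioo_subset_Ico_self hs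
      rw [hDe s hs']
      congr 1
      exact energy_diff (dv s hs') (dv' s hs') (hcV2 s hs') (dv t ht') (dv' t ht') (hcV2 t ht')
        (by simp only [hk2]) (pV1 s hs') (by simp only [hk2]) (pV1 t ht')
    refine HasDerivAt.congr_of_eventuallyEq ?_ hev
    refine ((dG.const_sub _).add ((dA.fun_pow 2).const_mul (2 * π))).congr_deriv ?_
    have hc := hck t ht'
    have hc2 := hcV2 t ht'
    have e := split_int (a := fun θ => k θ t ^ (p+1)) (q := fun θ => V2 (θ, t) + k θ t ^ p)
      (hc.pow _) (hc2.add (hc.pow p)) (mA p k t)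
    rw [e, intervalIntegral.integral_const_mul]
    have hI : ∫ θ in (0:ℝ)..(2 * π), d θ =
      ∫ θ in (0:ℝ)..(2 * π), k θ t ^ (p+1) * (V2 (θ, t) + k θ t ^ p) := rfl
    rw [← hI]
    have hJ : ∫ θ in (0:ℝ)..(2 * π), d θ * (V2 (θ, t) + k θ t ^ p) =
      ∫ θ in (0:ℝ)..(2 * π), k θ t ^ (p+1) * (V2 (θ, t) + k θ t ^ p) * (V2 (θ, t) + k θ t ^ p) := rfl
    rw [← hJ]
    generalize (∫ θ in (0:ℝ)..(2 * π), d θ) = I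
    generalize (∫ θ in (0:ℝ)..(2 * π), d θ * (V2 (θ, t) + k θ t ^ p)) = J
    generalize mA p k t = A
    have hpi' := hpi.ne'
    push_cast
    field_simp
    ring

lemma bernoulli_inv (p : ℕ) {y : ℝ} (hy : 0 < y) : 1 - p * (y - 1) ≤ (1 / y) ^ p := by
  rcases le_or_gt (1/2) y with h | h
  · obtain ⟨C, _, hC⟩ := tangent p
    exact (hC y h).1
  · have h2 : (2:ℝ) ≤ 1 / y := by rw [le_div_iff₀ hy]; linarith
    have h3 : (1:ℝ) + p ≤ 2 ^ p := by
      have := one_add_mul_le_pow (a := (1:ℝ)) (by norm_num) p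
      norm_num at this; linarith
    have h4 : (2:ℝ) ^ p ≤ (1 / y) ^ p := pow_le_pow_left₀ (by norm_num) h2 p
    have : (p:ℝ) * (y - 1) ≥ - p := by nlinarith [(Nat.cast_nonneg p : (0:ℝ) ≤ p)]
    linarith

lemma meanL_pos {f : ℝ → ℝ} (hf : Continuous f) (h0 : ∀ x, 0 < f x) :
    0 < (2 * π)⁻¹ * ∫ θ in (0:ℝ)..(2 * π), 1 / f θ := by
  have hpi := Real.two_pi_pos
  have hc : Continuous (fun x => 1 / f x) := continuous_const.div hf (fun x => (h0 x).ne')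
  have := intervalIntegral.intervalIntegral_pos_of_pos (hc.intervalIntegrable 0 (2*π))
    (fun x => by have := h0 x; positivity) hpi
  positivity

/-- averages of the linear part -/
lemma mean_lin {f : ℝ → ℝ} (hf : Continuous f) (h0 : ∀ x, 0 < f x) {L : ℝ} (hL0 : 0 < L)
    (hL : L = (2 * π)⁻¹ * ∫ θ in (0:ℝ)..(2 * π), 1 / f θ) (a b : ℝ) :
    ∫ θ in (0:ℝ)..(2 * π), (b - a * (1 / f θ / L - 1)) = 2 * π * b := by
  have hpi := Real.two_pi_pos
  have hc : Continuous (fun x => 1 / f x) := continuous_const.div hf (fun x => (h0 x).ne')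
  have e : ∀ θ, b - a * (1 / f θ / L - 1) = (b + a) - (a / L) * (1 / f θ) := fun θ => by
    field_simp; ring
  simp only [e]
  rw [intervalIntegral.integral_sub (by simp) ((hc.const_mul _).intervalIntegrable _ _),
    intervalIntegral.integral_const_mul, intervalIntegral.integral_const]
  have : ∫ θ in (0:ℝ)..(2 * π), 1 / f θ = 2 * π * L := by rw [hL]; field_simp
  rw [this]
  simp only [smul_eq_mul, sub_zero]
  field_simp
  ring

lemma jensen (p : ℕ) {f : ℝ → ℝ} (hf : Continuous f) (h0 : ∀ x, 0 < f x) {L : ℝ}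
    (hL : L = (2 * π)⁻¹ * ∫ θ in (0:ℝ)..(2 * π), 1 / f θ) :
    1 ≤ ((2 * π)⁻¹ * ∫ θ in (0:ℝ)..(2 * π), f θ ^ p) * L ^ p := by
  have hpi := Real.two_pi_pos
  have hL0 : 0 < L := hL ▸ meanL_pos hf h0
  have hc : Continuous (fun x => 1 / f x) := continuous_const.div hf (fun x => (h0 x).ne')
  have := intervalIntegral.integral_mono_on hpi.le
    (f := fun θ => 1 - (p:ℝ) * (1 / f θ / L - 1)) (g := fun θ => L ^ p * f θ ^ p) (μ := volume)
    ((continuous_const.sub (continuous_const.mul ((hc.div_const L).sub continuous_const))).intervalIntegrable _ _)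
    ((continuous_const.mul (hf.pow p)).intervalIntegrable _ _) (fun x _ => by
      have hx := h0 x
      have := bernoulli_inv p (y := 1 / f x / L) (by positivity)
      refine this.trans (le_of_eq ?_)
      rw [← mul_pow]; congr 1; field_simp)
  rw [mean_lin hf h0 hL0 hL, intervalIntegral.integral_const_mul] at this
  calc (1:ℝ) = (2 * π)⁻¹ * (2 * π * 1) := by field_simp
    _ ≤ (2 * π)⁻¹ * (L ^ p * ∫ θ in (0:ℝ)..(2 * π), f θ ^ p) := by gcongr
    _ = _ := by ring

lemma mean_upper {p : ℕ} {C : ℝ} (hC : ∀ y : ℝ, 1 / 2 ≤ y →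
    (1 / y) ^ p ≤ 1 - p * (y - 1) + C * (y - 1) ^ 2) (hC0 : 0 ≤ C)
    {f : ℝ → ℝ} (hf : Continuous f) (h0 : ∀ x, 0 < f x) {L : ℝ}
    (hL : L = (2 * π)⁻¹ * ∫ θ in (0:ℝ)..(2 * π), 1 / f θ) {s : ℝ} (hs : s ≤ 1 / 2)
    (hy : ∀ x ∈ Icc 0 (2 * π), |1 / f x / L - 1| ≤ s) :
    ((2 * π)⁻¹ * ∫ θ in (0:ℝ)..(2 * π), f θ ^ p) * L ^ p ≤ 1 + C * s ^ 2 := by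
  have hpi := Real.two_pi_pos
  have hL0 : 0 < L := hL ▸ meanL_pos hf h0
  have hc : Continuous (fun x => 1 / f x) := continuous_const.div hf (fun x => (h0 x).ne')
  have := intervalIntegral.integral_mono_on hpi.le
    (g := fun θ => (1 + C * s ^ 2) - (p:ℝ) * (1 / f θ / L - 1)) (f := fun θ => L ^ p * f θ ^ p) (μ := volume)
    ((continuous_const.mul (hf.pow p)).intervalIntegrable _ _)
    ((continuous_const.sub (continuous_const.mul ((hc.div_const L).sub continuous_const))).intervalIntegrable _ _)
    (fun x hx => by
      have hx0 := h0 x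
      have h1 := hy x hx
      have h2 := abs_le.1 h1
      have := hC (1 / f x / L) (by linarith)
      have h3 : (1 / f x / L - 1) ^ 2 ≤ s ^ 2 := by
        rw [← sq_abs]; exact pow_le_pow_left₀ (abs_nonneg _) h1 2
      have h4 : L ^ p * f x ^ p = (1 / (1 / f x / L)) ^ p := by
        rw [← mul_pow]; congr 1; field_simp
      have h5 := mul_le_mul_of_nonneg_left h3 hC0
      simp only [h4]
      linarith)
  rw [mean_lin hf h0 hL0 hL, intervalIntegral.integral_const_mul] at this
  calc _ = (2 * π)⁻¹ * (L ^ p * ∫ θ in (0:ℝ)..(2 * π), f θ ^ p) := by ring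
    _ ≤ (2 * π)⁻¹ * (2 * π * (1 + C * s ^ 2)) := by gcongr
    _ = _ := by field_simp

lemma y_close {p : ℕ} (hp : 1 ≤ p) {f : ℝ → ℝ} (hf : Continuous f) (h0 : ∀ x, 0 < f x) {L : ℝ}
    (hL : L = (2 * π)⁻¹ * ∫ θ in (0:ℝ)..(2 * π), 1 / f θ) {A w : ℝ} (hA : 0 < A)
    (hw1 : w ≤ 1 / 100) (hw : ∀ x ∈ Icc 0 (2 * π), |f x ^ p - A| ≤ w * A) :
    ∀ x ∈ Icc 0 (2 * π), |1 / f x / L - 1| ≤ 5 * w := by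
  have hpi := Real.two_pi_pos
  have hL0 : 0 < L := hL ▸ meanL_pos hf h0
  have hc : Continuous (fun x => 1 / f x) := continuous_const.div hf (fun x => (h0 x).ne')
  obtain ⟨κ, hκ, rfl⟩ := exists_kappa hp hA
  have key : ∀ x ∈ Icc 0 (2 * π), |κ * (1 / f x) - 1| ≤ 2 * w := by
    intro x hx
    have hx0 := h0 x
    have h1 : |(f x / κ) ^ p - 1| ≤ w := by
      rw [div_pow, div_sub_one (by positivity), abs_div, abs_of_pos (pow_pos hκ p),
        div_le_iff₀ (by positivity)]
      exact hw x hx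
    have h2 := x_inv hp (x := f x / κ) (by positivity) (h1.trans hw1)
    have e : 1 / (f x / κ) = κ * (1 / f x) := by field_simp
    rw [e] at h2
    linarith
  have hb : |κ * L - 1| ≤ 2 * w := by
    have e : κ * L - 1 = (2 * π)⁻¹ * ∫ θ in (0:ℝ)..(2 * π), (κ * (1 / f θ) - 1) := by
      rw [intervalIntegral.integral_sub ((hc.const_mul κ).intervalIntegrable _ _) (by simp),
        intervalIntegral.integral_const_mul, intervalIntegral.integral_const, hL]
      simp only [smul_eq_mul, sub_zero]
      field_simp
    have := intervalIntegral.norm_integral_le_of_norm_le_const (a := 0) (b := 2 * π)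
      (f := fun θ => κ * (1 / f θ) - 1) (C := 2 * w) (fun x hx => by
        rw [uIoc_of_le hpi.le] at hx
        exact key x (Ioc_subset_Icc_self hx))
    rw [e, abs_mul, abs_of_pos (by positivity : 0 < (2 * π)⁻¹)]
    rw [Real.norm_eq_abs, sub_zero, abs_of_pos hpi] at this
    calc _ ≤ (2 * π)⁻¹ * (2 * w * (2 * π)) := by gcongr
      _ = _ := by field_simp
  intro x hx
  have hx0 := h0 x
  have ha := abs_le.1 (key x hx)
  have hb := abs_le.1 hb
  have hb0 : 0 < κ * L := by positivity
  have e : 1 / f x / L = (κ * (1 / f x)) / (κ * L) := by field_simp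
  rw [e, div_sub_one hb0.ne', abs_div, abs_of_pos hb0, div_le_iff₀ hb0, abs_le]
  constructor <;> nlinarith

lemma boot {Q : ℝ → ℝ} {T ε : ℝ} (hε : 0 < ε) (hQ : ContinuousOn Q (Ico 0 T)) (h0 : Q 0 ≤ 2 * ε)
    (hstep : ∀ t ∈ Ico 0 T, (∀ s ∈ Icc 0 t, Q s ≤ 3 * ε) → Q t ≤ 2 * ε) :
    ∀ t ∈ Ico 0 T, Q t ≤ 2 * ε := by
  intro t ht
  by_cases hB : ∃ s ∈ Icc 0 t, 3 * ε ≤ Q s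
  · exfalso
    have hsub : Icc 0 t ⊆ Ico 0 T := fun s hs => ⟨hs.1, hs.2.trans_lt ht.2⟩
    have hcomp : IsCompact (Icc 0 t ∩ Q ⁻¹' Ici (3 * ε)) :=
      isCompact_Icc.of_isClosed_subset
        ((hQ.mono hsub).preimage_isClosed_of_isClosed isClosed_Icc isClosed_Ici) inter_subset_left
    obtain ⟨s0, hs0, hs1⟩ := hB
    obtain ⟨m, ⟨hm1, hm2⟩, hm3⟩ := hcomp.exists_isLeast ⟨s0, hs0, hs1⟩
    have hsub2 : Icc 0 m ⊆ Icc 0 t := Icc_subset_Icc_right hm1.2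
    have h3 : 3 * ε ∈ Q '' Icc 0 m := intermediate_value_Icc hm1.1
      (hQ.mono (hsub2.trans hsub)) ⟨by linarith, hm2⟩
    obtain ⟨s, hs, hs3⟩ := h3
    have hsm : m ≤ s := hm3 ⟨hsub2 hs, hs3.ge⟩
    have : s = m := le_antisymm hs.2 hsm
    subst this
    have := hstep s (hsub hm1) (fun r hr => by
      by_contra hc
      push Not at hc
      have h1 := hm3 ⟨hsub2 hr, hc.le⟩
      have : r = s := le_antisymm hr.2 h1
      subst this; linarith)
    linarith
  · push Not at hB
    exact hstep t ht (fun s hs => (hB s hs).le)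

lemma stage {p : ℕ} (hp : 1 ≤ p) : ∃ cp > (0:ℝ), ∀ (T : ℝ), 0 < T → ∀ (k : ℝ → ℝ → ℝ) (ψ : ℝ → ℝ),
    IsPCSF p T k ψ → cp * seminorm2 ψ ≤ (fCoeff ψ 0).re →
    ContinuousOn (mL k) (Ico 0 T) ∧
    (∀ t ∈ Ioo 0 T, HasDerivAt (mL k) (-(1 / (p:ℝ)) * mA p k t) t) ∧
    ∃ C : ℝ, 0 ≤ C ∧ ∀ t ∈ Ico 0 T, 0 < mL k t ∧
      1 ≤ mA p k t * mL k t ^ p ∧ mA p k t * mL k t ^ p ≤ 1 + C * mL k t ^ (2 * p) ∧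
      1 ≤ (fCoeff (fun θ => k θ t) 0).re * mL k t ∧
      (fCoeff (fun θ => k θ t) 0).re * mL k t ≤ 1 + C * mL k t ^ (2 * p) ∧
      ∀ x ∈ Icc 0 (2 * π), k x t * mL k t ≤ 2 := by
  have hpi := Real.two_pi_pos
  obtain ⟨δ, hδ0, hδ1, hdis⟩ := dissipation hp
  set ε : ℝ := δ ^ 2 / (6 * π) with hε
  have hε0 : 0 < ε := by positivity
  obtain ⟨η, hη0, hib⟩ := initial_b hp ε hε0
  obtain ⟨cp, hcp0, hia⟩ := initial_a η hη0
  refine ⟨cp, hcp0, fun T hT k ψ hk hc => ?_⟩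
  obtain ⟨V1, V2, hck, dv, dv', hcV2, pV1, hV0, cW, cL, cD, dL, dD⟩ := flow hp hT hk
  obtain ⟨hsm, hper, hpos, heq, hini, hψ, hψ0, hψp, hblow, hcl⟩ := hk
  have h0T : (0:ℝ) ∈ Ico 0 T := ⟨le_rfl, hT⟩
  have hL0 : ∀ t ∈ Ico 0 T, 0 < mL k t := fun t ht => meanL_pos (hck t ht) (fun x => hpos x t ht)
  have hAL : ∀ t ∈ Ico 0 T, 1 ≤ mA p k t * mL k t ^ p := fun t ht =>
    jensen p (hck t ht) (fun x => hpos x t ht) rfl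
  have hA0 : ∀ t ∈ Ico 0 T, 0 < mA p k t := by
    intro t ht
    have := hAL t ht
    by_contra hc
    have : mA p k t * mL k t ^ p ≤ 0 :=
      mul_nonpos_of_nonpos_of_nonneg (not_lt.1 hc) (pow_nonneg (hL0 t ht).le p)
    linarith
  have hAI : ∀ t, 2 * π * mA p k t = ∫ θ in (0:ℝ)..(2 * π), k θ t ^ p := fun t => by
    rw [mA]; field_simp
  have hW0 : ∀ t, 0 ≤ mW V1 t := fun t =>
    intervalIntegral.integral_nonneg hpi.le (fun x _ => sq_nonneg _)
  have hcV1 : ∀ t ∈ Ico 0 T, Continuous (fun x => V1 (x, t)) := fun t ht =>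
    continuous_iff_continuousAt.2 fun x => (dv' t ht x).continuousAt
  set Q : ℝ → ℝ := fun t => mW V1 t * mL k t ^ (2 * p) with hQ
  have hQ0 : ∀ t ∈ Ico 0 T, 0 ≤ Q t := fun t ht => mul_nonneg (hW0 t) (pow_nonneg (hL0 t ht).le _)
  have hdev : ∀ t ∈ Ico 0 T, ∀ x ∈ Icc 0 (2 * π),
      |k x t ^ p - mA p k t| ≤ √(2 * π * Q t) * mA p k t := by
    intro t ht x hx
    have hkp : Continuous (fun x => k x t ^ p) := (hck t ht).pow p
    have h1 := sup_bound (f := fun x => k x t ^ p - mA p k t) (f' := fun x => V1 (x, t))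
      (fun x => (dv t ht x).sub_const _) (hcV1 t ht) (by
        rw [intervalIntegral.integral_sub (hkp.intervalIntegrable _ _) (by simp), ← hAI,
          intervalIntegral.integral_const]
        simp) hx
    have hA := hA0 t ht
    have h2 : 1 ≤ (mA p k t * mL k t ^ p) ^ 2 := one_le_pow₀ (hAL t ht)
    have h3 : mW V1 t ≤ Q t * mA p k t ^ 2 := by
      have := mul_le_mul_of_nonneg_left h2 (hW0 t)
      simp only [hQ]
      calc mW V1 t = mW V1 t * 1 := by ring
        _ ≤ _ := this
        _ = _ := by rw [mul_pow, ← pow_mul, mul_comm p 2]; ring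
    have h4 : (k x t ^ p - mA p k t) ^ 2 ≤ (√(2 * π * Q t) * mA p k t) ^ 2 := by
      rw [mul_pow, Real.sq_sqrt (by have := hQ0 t ht; positivity)]
      refine h1.trans ?_
      change 2 * π * mW V1 t ≤ _
      nlinarith
    exact abs_le_of_sq_le_sq h4 (by positivity)
  have hsq : ∀ t ∈ Ico 0 T, Q t ≤ 3 * ε → √(2 * π * Q t) ≤ δ := by
    intro t ht h
    apply Real.sqrt_le_iff.2
    refine ⟨hδ0.le, ?_⟩
    calc 2 * π * Q t ≤ 2 * π * (3 * ε) := by gcongr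
      _ = δ ^ 2 := by rw [hε]; field_simp; ring
  have hds := fun t (ht : t ∈ Ico 0 T) (h : Q t ≤ 3 * ε) =>
    hdis (fun x => k x t) (fun x => V1 (x, t)) (fun x => V2 (x, t)) (mA p k t) (hck t ht)
      (fun x => hpos x t ht) (fun x => hper x t) (dv t ht) (dv' t ht) (hcV2 t ht) (pV1 t ht)
      (hAI t) (fun x hx => (hdev t ht x hx).trans
        (mul_le_mul_of_nonneg_right (hsq t ht h) (hA0 t ht).le)) (hcl t ht)
  have hLanti : AntitoneOn (mL k) (Ico 0 T) := by
    apply antitoneOn_of_deriv_nonpos (convex_Ico 0 T) cL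
    · rw [interior_Ico]; exact fun t ht => (dL t ht).differentiableAt.differentiableWithinAt
    · rw [interior_Ico]; intro t ht
      rw [(dL t ht).deriv]
      have := hA0 t (Ioo_subset_Ico_self ht)
      have : 0 ≤ (1 / (p:ℝ)) * mA p k t := by positivity
      linarith
  have hDanti : ∀ t ∈ Ico 0 T, (∀ s ∈ Icc 0 t, Q s ≤ 3 * ε) → mD p k V1 t ≤ mD p k V1 0 := by
    intro t ht hs
    have hsub : Icc 0 t ⊆ Ico 0 T := fun s hs => ⟨hs.1, hs.2.trans_lt ht.2⟩
    have : AntitoneOn (mD p k V1) (Icc 0 t) := by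
      apply antitoneOn_of_deriv_nonpos (convex_Icc 0 t) (cD.mono hsub)
      · rw [interior_Icc]
        exact fun s hs => (dD s ⟨hs.1, hs.2.trans ht.2⟩).differentiableAt.differentiableWithinAt
      · rw [interior_Icc]; intro s hs1
        have hs2 := Ioo_subset_Icc_self hs1
        rw [(dD s ⟨hs1.1, hs1.2.trans ht.2⟩).deriv]
        have := (hds s (hsub hs2) (hs s hs2)).1
        linarith
    exact this ⟨le_rfl, ht.1⟩ ⟨ht.1, le_rfl⟩ ht.1
  have hD0 : mD p k V1 0 ≤ mW V1 0 := by
    rw [mD]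
    have : 0 ≤ ∫ θ in (0:ℝ)..(2 * π), (k θ 0 ^ p - mA p k 0) ^ 2 :=
      intervalIntegral.integral_nonneg hpi.le (fun x _ => sq_nonneg _)
    linarith
  have hWD : ∀ t ∈ Ico 0 T, (∀ s ∈ Icc 0 t, Q s ≤ 3 * ε) → mW V1 t ≤ 2 * mW V1 0 := by
    intro t ht hs
    have h1 : mW V1 t ≤ 2 * mD p k V1 t := (hds t ht (hs t ⟨ht.1, le_rfl⟩)).2
    have h2 := hDanti t ht hs
    linarith
  have hQini : Q 0 ≤ ε := by
    have d1 : ∀ x, HasDerivAt ψ (deriv ψ x) x := fun x =>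
      ((hψ.differentiable (by simp)) x).hasDerivAt
    have hψ1 : ContDiff ℝ 1 (deriv ψ) := by
      exact ((contDiff_infty_iff_deriv.1 hψ).2).of_le (by exact_mod_cast le_top)
    have d2 : ∀ x, HasDerivAt (deriv ψ) (deriv (deriv ψ) x) x := fun x =>
      ((hψ1.differentiable (by simp)) x).hasDerivAt
    have hper' : deriv ψ (2 * π) = deriv ψ 0 := by
      have b := (d1 (0 + 2 * π)).comp_add_const 0 (2 * π)
      simp only [hψp] at b
      have := b.unique (d1 0)
      simpa using this
    have ha := hia ψ (deriv ψ) (deriv (deriv ψ)) d1 d2 (hψ1.continuous_deriv le_rfl)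
      (by simpa using hψp 0) hper' hc
    have hb := hib ψ (deriv ψ) d1 hψ1.continuous hψ0 ha
    simp only [hQ, mW, mL, hV0, hini]
    exact hb
  have hboot := boot hε0 (cW.mul (cL.pow (2 * p))) (by linarith : Q 0 ≤ 2 * ε) (by
    intro t ht hs
    have h1 := hWD t ht hs
    have h2 : mL k t ^ (2 * p) ≤ mL k 0 ^ (2 * p) :=
      pow_le_pow_left₀ (hL0 t ht).le (hLanti h0T ht ht.1) _
    have h3 : 0 ≤ mL k 0 ^ (2 * p) := pow_nonneg (hL0 0 h0T).le _
    have h4 : 0 ≤ mL k t ^ (2 * p) := pow_nonneg (hL0 t ht).le _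
    calc mW V1 t * mL k t ^ (2 * p) ≤ (2 * mW V1 0) * mL k 0 ^ (2 * p) := by
          apply mul_le_mul h1 h2 h4; linarith [hW0 0]
      _ = 2 * Q 0 := by simp only [hQ]; ring
      _ ≤ 2 * ε := by linarith)
  have hQs : ∀ t ∈ Ico 0 T, Q t ≤ 3 * ε := fun t ht => by
    have : Q t ≤ 2 * ε := hboot t ht
    linarith
  have hWf : ∀ t ∈ Ico 0 T, mW V1 t ≤ 2 * mW V1 0 := fun t ht =>
    hWD t ht (fun s hs => hQs s ⟨hs.1, hs.2.trans_lt ht.2⟩)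
  obtain ⟨Ca, hCa, hta⟩ := tangent p
  obtain ⟨Cb, hCb, htb⟩ := tangent 1
  set C0 : ℝ := 25 * (2 * π * (2 * mW V1 0)) with hC0
  have hC00 : 0 ≤ C0 := by have := hW0 0; positivity
  refine ⟨cL, dL, (Ca + Cb) * C0, by positivity, fun t ht => ?_⟩
  have hLt := hL0 t ht
  have hy := y_close hp (hck t ht) (fun x => hpos x t ht) (L := mL k t) rfl (hA0 t ht)
    ((hsq t ht (hQs t ht)).trans hδ1) (hdev t ht)
  have hs12 : 5 * √(2 * π * Q t) ≤ 1 / 2 := by linarith [(hsq t ht (hQs t ht)).trans hδ1]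
  have hs2 : (5 * √(2 * π * Q t)) ^ 2 ≤ C0 * mL k t ^ (2 * p) := by
    rw [mul_pow, Real.sq_sqrt (by have := hQ0 t ht; positivity), hC0]
    have h4 : 0 ≤ mL k t ^ (2 * p) := pow_nonneg hLt.le _
    have := mul_le_mul_of_nonneg_right (hWf t ht) h4
    simp only [hQ]
    nlinarith
  have hL2 : 0 ≤ C0 * mL k t ^ (2 * p) := by positivity
  have hK := fCoeff_zero (fun θ => k θ t)
  refine ⟨hLt, hAL t ht, ?_, ?_, ?_, ?_⟩
  · have := mean_upper (fun y hy => (hta y hy).2) hCa (hck t ht) (fun x => hpos x t ht)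
      (L := mL k t) rfl hs12 hy
    have h1 := mul_le_mul_of_nonneg_left hs2 hCa
    have h2 := mul_nonneg hCb hL2
    refine le_trans this ?_
    linarith
  · have := jensen 1 (hck t ht) (fun x => hpos x t ht) (L := mL k t) rfl
    simp only [pow_one] at this
    rw [hK]; exact this
  · have := mean_upper (fun y hy => (htb y hy).2) hCb (hck t ht) (fun x => hpos x t ht)
      (L := mL k t) rfl hs12 hy
    simp only [pow_one] at this
    have h1 := mul_le_mul_of_nonneg_left hs2 hCb
    have h2 := mul_nonneg hCa hL2
    rw [hK]
    refine le_trans this ?_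
    linarith
  · intro x hx
    have hkx := hpos x t ht
    have h1 := (abs_le.1 (hy x hx)).1
    have h2 : 1 / 2 ≤ 1 / k x t / mL k t := by linarith
    rw [div_div, div_le_div_iff₀ (by norm_num) (by positivity)] at h2
    linarith

lemma L_to_zero {T : ℝ} (hT : 0 < T) {k : ℝ → ℝ → ℝ} {L : ℝ → ℝ}
    (hk : ∀ x, ∀ t ∈ Ico 0 T, 0 < k x t) (hL0 : ∀ t ∈ Ico 0 T, 0 < L t)
    (hkL : ∀ t ∈ Ico 0 T, ∀ x ∈ Icc 0 (2 * π), k x t * L t ≤ 2)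
    (hb : Tendsto (fun t => ⨆ θ : Set.Icc (0:ℝ) (2 * Real.pi), k (θ : ℝ) t)
      (nhdsWithin T (Set.Iio T)) Filter.atTop) :
    Tendsto L (nhdsWithin T (Iio T)) (nhds 0) := by
  have hpi := Real.two_pi_pos
  have : Nonempty (Set.Icc (0:ℝ) (2 * Real.pi)) := ⟨⟨0, le_rfl, hpi.le⟩⟩
  have hmem : ∀ᶠ t in nhdsWithin T (Iio T), t ∈ Ico 0 T := by
    filter_upwards [Ioo_mem_nhdsLT hT] with t ht using Ioo_subset_Ico_self ht
  rw [tendsto_order]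
  constructor
  · intro a ha
    filter_upwards [hmem] with t ht
    exact ha.trans (hL0 t ht)
  · intro a ha
    filter_upwards [hmem, hb.eventually_gt_atTop (2 / a)] with t ht h
    obtain ⟨x, hx⟩ := exists_lt_of_lt_ciSup h
    have h1 := hkL t ht x x.2
    have h2 := hk x t ht
    rw [div_lt_iff₀ ha] at hx
    by_contra hc
    push Not at hc
    nlinarith

lemma ode {p : ℕ} (hp : 1 ≤ p) {T : ℝ} {L A : ℝ → ℝ} (cL : ContinuousOn L (Ico 0 T))
    (dL : ∀ t ∈ Ioo 0 T, HasDerivAt L (-(1 / (p:ℝ)) * A t) t) {C : ℝ} (hC : 0 ≤ C)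
    (hL0 : ∀ t ∈ Ico 0 T, 0 < L t) (h1 : ∀ t ∈ Ico 0 T, 1 ≤ A t * L t ^ p)
    (h2 : ∀ t ∈ Ico 0 T, A t * L t ^ p ≤ 1 + C * L t ^ (2 * p))
    (hlim : Tendsto L (nhdsWithin T (Iio T)) (nhds 0)) :
    ∀ t ∈ Ico 0 T, L t ≤ L 0 ∧ ((p:ℝ) + 1) / p * (T - t) ≤ L t ^ (p + 1) ∧
      L t ^ (p + 1) ≤ ((p:ℝ) + 1) / p * (1 + C * L t ^ (2 * p)) * (T - t) := by
  have hp0 : (0:ℝ) < p := by exact_mod_cast hp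
  set c : ℝ := ((p:ℝ) + 1) / p with hc
  have hc0 : 0 < c := by positivity
  have hA0 : ∀ t ∈ Ico 0 T, 0 < A t := by
    intro t ht
    have := h1 t ht
    by_contra hc
    have : A t * L t ^ p ≤ 0 :=
      mul_nonpos_of_nonpos_of_nonneg (not_lt.1 hc) (pow_nonneg (hL0 t ht).le p)
    linarith
  have hLanti : AntitoneOn L (Ico 0 T) := by
    apply antitoneOn_of_deriv_nonpos (convex_Ico 0 T) cL
    · rw [interior_Ico]; exact fun t ht => (dL t ht).differentiableAt.differentiableWithinAt
    · rw [interior_Ico]; intro t ht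
      rw [(dL t ht).deriv]
      have := hA0 t (Ioo_subset_Ico_self ht)
      have : 0 ≤ (1 / (p:ℝ)) * A t := by positivity
      linarith
  have dM : ∀ t ∈ Ioo 0 T, ∀ b : ℝ, HasDerivAt (fun s => L s ^ (p + 1) + b * s)
      (-c * (A t * L t ^ p) + b) t := by
    intro t ht b
    have := ((dL t ht).fun_pow (p + 1)).add ((hasDerivAt_id t).const_mul b)
    refine this.congr_deriv ?_
    simp only [Nat.add_sub_cancel, hc]
    push_cast
    field_simp
  have cM : ∀ b : ℝ, ContinuousOn (fun s => L s ^ (p + 1) + b * s) (Ico 0 T) := fun b =>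
    (cL.pow _).add (by fun_prop)
  have lM : ∀ b : ℝ, Tendsto (fun s => L s ^ (p + 1) + b * s) (nhdsWithin T (Iio T))
      (nhds (b * T)) := by
    intro b
    have a1 := hlim.pow (p + 1)
    have a2 : Tendsto (fun s : ℝ => b * s) (nhdsWithin T (Iio T)) (nhds (b * T)) :=
      ((continuous_const.mul continuous_id).tendsto T).mono_left nhdsWithin_le_nhds
    have := a1.add a2
    simpa using this
  intro t ht
  have hT : 0 < T := ht.1.trans_lt ht.2
  refine ⟨hLanti ⟨le_rfl, hT⟩ ht ht.1, ?_, ?_⟩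
  · have hanti : AntitoneOn (fun s => L s ^ (p + 1) + c * s) (Ico 0 T) := by
      apply antitoneOn_of_deriv_nonpos (convex_Ico 0 T) (cM c)
      · rw [interior_Ico]; exact fun t ht => (dM t ht c).differentiableAt.differentiableWithinAt
      · rw [interior_Ico]; intro s hs
        rw [(dM s hs c).deriv]
        have := h1 s (Ioo_subset_Ico_self hs)
        nlinarith
    have : c * T ≤ L t ^ (p + 1) + c * t := by
      refine le_of_tendsto (lM c) ?_
      filter_upwards [Ioo_mem_nhdsLT ht.2] with s hs
      exact hanti ht ⟨ht.1.trans hs.1.le, hs.2⟩ hs.1.le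
    linarith
  · set b := c * (1 + C * L t ^ (2 * p)) with hb
    have hsub : Ico t T ⊆ Ico 0 T := Ico_subset_Ico_left ht.1
    have hmono : MonotoneOn (fun s => L s ^ (p + 1) + b * s) (Ico t T) := by
      apply monotoneOn_of_deriv_nonneg (convex_Ico t T) ((cM b).mono hsub)
      · rw [interior_Ico]
        exact fun s hs => (dM s ⟨ht.1.trans_lt hs.1, hs.2⟩ b).differentiableAt.differentiableWithinAt
      · rw [interior_Ico]; intro s hs
        have hs' : s ∈ Ico 0 T := hsub (Ioo_subset_Ico_self hs)
        rw [(dM s ⟨ht.1.trans_lt hs.1, hs.2⟩ b).deriv]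
        have h3 := h2 s hs'
        have h4 : L s ^ (2 * p) ≤ L t ^ (2 * p) :=
          pow_le_pow_left₀ (hL0 s hs').le (hLanti ht hs' hs.1.le) _
        have h5 : A s * L s ^ p ≤ 1 + C * L t ^ (2 * p) := by nlinarith
        have := mul_le_mul_of_nonneg_left h5 hc0.le
        linarith
    have : L t ^ (p + 1) + b * t ≤ b * T := by
      refine ge_of_tendsto (lM b) ?_
      filter_upwards [Ioo_mem_nhdsLT ht.2] with s hs
      exact hmono ⟨le_rfl, ht.2⟩ ⟨hs.1.le, hs.2⟩ hs.1.le
    linarith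

lemma le_rpow_neg {p : ℕ} {X B : ℝ} (hX : 0 < X) (hB : 0 < B) (h : X ^ (p + 1) * B ≤ 1) :
    X ≤ B ^ (-((1 : ℝ) / ((p : ℝ) + 1))) := by
  have e : X = (X ^ (p + 1)) ^ ((1 : ℝ) / ((p : ℝ) + 1)) := by
    have := Real.pow_rpow_inv_natCast hX.le (n := p + 1) (by omega)
    push_cast at this
    rw [one_div, this]
  rw [Real.rpow_neg hB.le, ← Real.inv_rpow hB.le]
  nth_rewrite 1 [e]
  apply Real.rpow_le_rpow (by positivity) _ (by positivity)
  rwa [← one_div, le_div_iff₀ hB]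

lemma rpow_neg_le {p : ℕ} {X B : ℝ} (hX : 0 < X) (hB : 0 < B) (h : 1 ≤ X ^ (p + 1) * B) :
    B ^ (-((1 : ℝ) / ((p : ℝ) + 1))) ≤ X := by
  have e : X = (X ^ (p + 1)) ^ ((1 : ℝ) / ((p : ℝ) + 1)) := by
    have := Real.pow_rpow_inv_natCast hX.le (n := p + 1) (by omega)
    push_cast at this
    rw [one_div, this]
  rw [Real.rpow_neg hB.le, ← Real.inv_rpow hB.le]
  nth_rewrite 1 [e]
  apply Real.rpow_le_rpow (by positivity) _ (by positivity)
  rwa [← one_div, div_le_iff₀ hB]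

lemma finish {p : ℕ} (hp : 1 ≤ p) {T : ℝ} (hT : 0 < T) {L K : ℝ → ℝ} {C : ℝ} (hC : 0 ≤ C)
    (hL0 : ∀ t ∈ Ico 0 T, 0 < L t)
    (hK1 : ∀ t ∈ Ico 0 T, 1 ≤ K t * L t)
    (hK2 : ∀ t ∈ Ico 0 T, K t * L t ≤ 1 + C * L t ^ (2 * p))
    (hM : ∀ t ∈ Ico 0 T, L t ≤ L 0 ∧ ((p:ℝ) + 1) / p * (T - t) ≤ L t ^ (p + 1) ∧
      L t ^ (p + 1) ≤ ((p:ℝ) + 1) / p * (1 + C * L t ^ (2 * p)) * (T - t)) :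
    ∃ c₁ > (0:ℝ), ∃ t₀ : ℝ, 0 < t₀ ∧ t₀ < T ∧ ∀ t : ℝ, t₀ < t → t < T →
        0 < (T - t) - c₁ * (T - t) ^ (1 + 2 / ((p : ℝ) + 1)) ∧
        (((p : ℝ) + 1) / (p : ℝ)) ^ ((1 : ℝ) / ((p : ℝ) + 1)) * K t
          ≤ ((T - t) - c₁ * (T - t) ^ (1 + 2 / ((p : ℝ) + 1)))
              ^ (-((1 : ℝ) / ((p : ℝ) + 1))) ∧
        ((T - t) + c₁ * (T - t) ^ (1 + 2 / ((p : ℝ) + 1)))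
              ^ (-((1 : ℝ) / ((p : ℝ) + 1)))
          ≤ (((p : ℝ) + 1) / (p : ℝ)) ^ ((1 : ℝ) / ((p : ℝ) + 1)) * K t := by
  have hp0 : (0:ℝ) < p := by exact_mod_cast hp
  set c : ℝ := ((p:ℝ) + 1) / p with hc
  have hc0 : 0 < c := by positivity
  set q : ℝ := 2 / ((p:ℝ) + 1) with hq
  have hq0 : 0 < q := by positivity
  have hL00 := hL0 0 ⟨le_rfl, hT⟩
  set C3 : ℝ := c * (1 + C * L 0 ^ (2 * p)) with hC3
  have hC30 : 0 < C3 := by positivity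
  set C4 : ℝ := L 0 ^ (2 * (p - 1)) * C3 ^ q with hC4
  have hC40 : 0 < C4 := by positivity
  have hL2 : ∀ t ∈ Ico 0 T, L t ^ (2 * p) ≤ C4 * (T - t) ^ q := by
    intro t ht
    have hLt := hL0 t ht
    obtain ⟨m1, m2, m3⟩ := hM t ht
    have hσ : 0 < T - t := by linarith [ht.2]
    have h3 : L t ^ (p + 1) ≤ C3 * (T - t) := by
      refine m3.trans ?_
      have : L t ^ (2 * p) ≤ L 0 ^ (2 * p) := pow_le_pow_left₀ hLt.le m1 _
      rw [hC3]
      gcongr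
    have e : L t ^ 2 = (L t ^ (p + 1)) ^ q := by
      rw [← Real.rpow_natCast, ← Real.rpow_natCast, ← Real.rpow_mul hLt.le]
      congr 1
      rw [hq]; push_cast; field_simp
    have h4 : L t ^ 2 ≤ C3 ^ q * (T - t) ^ q := by
      rw [e, ← Real.mul_rpow hC30.le hσ.le]
      exact Real.rpow_le_rpow (by positivity) h3 hq0.le
    calc L t ^ (2 * p) = L t ^ (2 * (p - 1)) * L t ^ 2 := by
          rw [← pow_add]; congr 1; omega
      _ ≤ L 0 ^ (2 * (p - 1)) * (C3 ^ q * (T - t) ^ q) := by gcongr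
      _ = _ := by rw [hC4]; ring
  set c₁ : ℝ := (p + 1) * (C * C4) + 1 with hc₁
  have hc₁0 : 0 < c₁ := by positivity
  have hev : ∀ᶠ t in nhdsWithin T (Iio T), c₁ * (T - t) ^ q < 1 := by
    have : ContinuousAt (fun t => c₁ * (T - t) ^ q) T :=
      continuousAt_const.mul ((continuousAt_const.sub continuousAt_id).rpow_const (Or.inr hq0.le))
    have h1 := this.tendsto
    simp only [sub_self, Real.zero_rpow hq0.ne', mul_zero] at h1
    exact (h1.mono_left nhdsWithin_le_nhds).eventually_lt_const one_pos
  obtain ⟨l, hl, hl2⟩ := (mem_nhdsLT_iff_exists_Ioo_subset' hT).1 hev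
  refine ⟨c₁, hc₁0, max l (T / 2), by positivity, max_lt hl (by linarith), fun t ht1 ht2 => ?_⟩
  have htl : c₁ * (T - t) ^ q < 1 := hl2 ⟨(le_max_left _ _).trans_lt ht1, ht2⟩
  have htT := (le_max_right _ _).trans_lt ht1
  have ht : t ∈ Ico 0 T := ⟨by linarith, ht2⟩
  have hσ : 0 < T - t := by linarith
  have hLt := hL0 t ht
  have h2 := hL2 t ht
  obtain ⟨m1, m2, m3⟩ := hM t ht
  have k1 := hK1 t ht
  have k2 := hK2 t ht
  have hK : 0 < K t := by
    by_contra hn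
    have := mul_nonpos_of_nonpos_of_nonneg (not_lt.1 hn) hLt.le
    linarith
  rw [Real.rpow_add hσ, Real.rpow_one]
  set S := (T - t) ^ q with hS
  have hS0 : 0 < S := by positivity
  set σ := T - t with hσd
  have hX : (c ^ ((1 : ℝ) / ((p : ℝ) + 1)) * K t) ^ (p + 1) = c * K t ^ (p + 1) := by
    rw [mul_pow]
    congr 1
    have := Real.rpow_inv_natCast_pow hc0.le (n := p + 1) (by omega)
    push_cast at this
    rw [one_div, this]
  have hX0 : 0 < c ^ ((1 : ℝ) / ((p : ℝ) + 1)) * K t := by positivity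
  set u := C * L t ^ (2 * p) with hu
  have hu0 : 0 ≤ u := by positivity
  have hu1 : (p + 1) * u ≤ c₁ * S := by
    have : u ≤ C * (C4 * S) := mul_le_mul_of_nonneg_left h2 hC
    have : (p + 1) * u ≤ (p + 1) * (C * (C4 * S)) := by gcongr
    rw [hc₁]
    nlinarith
  have hB : 0 < σ - c₁ * (σ * S) := by nlinarith
  have hKp : 0 < K t ^ (p + 1) := by positivity
  have hMp : 0 < L t ^ (p + 1) := by positivity
  refine ⟨hB, le_rpow_neg hX0 hB ?_, rpow_neg_le hX0 (by positivity) ?_⟩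
  · rw [hX]
    have b := bernoulli_inv (p + 1) (y := 1 + u) (by linarith)
    push_cast at b
    have b2 : (1 - (p + 1) * u) * (1 + u) ^ (p + 1) ≤ 1 := by
      rw [one_div, inv_pow] at b
      have : 0 < (1 + u) ^ (p + 1) := by positivity
      rw [← le_div_iff₀ this, one_div]
      refine le_trans (le_of_eq ?_) b
      ring
    have b3 : (K t * L t) ^ (p + 1) ≤ (1 + u) ^ (p + 1) := pow_le_pow_left₀ (by linarith) k2 _
    rw [mul_pow] at b3
    have b4 : 0 < 1 - c₁ * S := by linarith
    calc c * K t ^ (p + 1) * (σ - c₁ * (σ * S)) = (1 - c₁ * S) * (K t ^ (p + 1) * (c * σ)) := by ring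
      _ ≤ (1 - c₁ * S) * (K t ^ (p + 1) * L t ^ (p + 1)) := by gcongr
      _ ≤ (1 - c₁ * S) * (1 + u) ^ (p + 1) := by gcongr
      _ ≤ (1 - (p + 1) * u) * (1 + u) ^ (p + 1) := by gcongr
      _ ≤ 1 := b2
  · rw [hX]
    have b3 : 1 ≤ (K t * L t) ^ (p + 1) := one_le_pow₀ k1
    rw [mul_pow] at b3
    have b5 : u ≤ c₁ * S := by nlinarith
    calc (1:ℝ) ≤ K t ^ (p + 1) * L t ^ (p + 1) := b3
      _ ≤ K t ^ (p + 1) * (c * (1 + u) * σ) := by gcongr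
      _ ≤ K t ^ (p + 1) * (c * (1 + c₁ * S) * σ) := by gcongr
      _ = _ := by ring

/-- There is `c_p > 0` depending only on `p` such that if `ψ̂(0) ≥ c_p ‖ψ‖₂`,
then there are `c₁ > 0` and `t₀ ∈ (0,T)` such that for all `t ∈ (t₀,T)`:
`((p+1)/p)^{1/(p+1)} k̂(0,t) ≤ [(T-t) - c₁(T-t)^{1+2/(p+1)}]^{-1/(p+1)}` and
`((p+1)/p)^{1/(p+1)} k̂(0,t) ≥ [(T-t) + c₁(T-t)^{1+2/(p+1)}]^{-1/(p+1)}`. -/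
theorem statement9 (p : ℕ) (hp : 1 ≤ p) :
    ∃ cp > (0:ℝ), ∀ (T : ℝ), 0 < T → ∀ (k : ℝ → ℝ → ℝ) (ψ : ℝ → ℝ),
      IsPCSF p T k ψ →
      cp * seminorm2 ψ ≤ (fCoeff ψ 0).re →
      ∃ c₁ > (0:ℝ), ∃ t₀ : ℝ, 0 < t₀ ∧ t₀ < T ∧ ∀ t : ℝ, t₀ < t → t < T →
        0 < (T - t) - c₁ * (T - t) ^ (1 + 2 / ((p : ℝ) + 1)) ∧
        (((p : ℝ) + 1) / (p : ℝ)) ^ ((1 : ℝ) / ((p : ℝ) + 1))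
            * (fCoeff (fun θ => k θ t) 0).re
          ≤ ((T - t) - c₁ * (T - t) ^ (1 + 2 / ((p : ℝ) + 1)))
              ^ (-((1 : ℝ) / ((p : ℝ) + 1))) ∧
        ((T - t) + c₁ * (T - t) ^ (1 + 2 / ((p : ℝ) + 1)))
              ^ (-((1 : ℝ) / ((p : ℝ) + 1)))
          ≤ (((p : ℝ) + 1) / (p : ℝ)) ^ ((1 : ℝ) / ((p : ℝ) + 1))
            * (fCoeff (fun θ => k θ t) 0).re := by
  obtain ⟨cp, hcp, H⟩ := stage hp
  refine ⟨cp, hcp, fun T hT k ψ hk hc => ?_⟩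
  obtain ⟨cL, dL, C, hC, h⟩ := H T hT k ψ hk hc
  have hlim := L_to_zero hT hk.2.2.1 (fun t ht => (h t ht).1)
    (fun t ht => (h t ht).2.2.2.2.2) hk.2.2.2.2.2.2.2.2.1
  exact finish hp hT (K := fun t => (fCoeff (fun θ => k θ t) 0).re) hC (fun t ht => (h t ht).1)
    (fun t ht => (h t ht).2.2.2.1) (fun t ht => (h t ht).2.2.2.2.1)
    (ode hp cL dL hC (fun t ht => (h t ht).1) (fun t ht => (h t ht).2.1)
      (fun t ht => (h t ht).2.2.1) hlim)
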